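/- Let K be an infinite field, S = K[x_1,...,x_n], and fix an integer j. Let I ⊆ S and J ⊆ S be homogeneous ideals. Then for a general change of coordinates g ∈ GL_n(K), one has dim_K Tor_i^S(I, S/g(J))_j ≤ dim_K Tor_i^S(Gin_lex(I), S/Gin_oplex(J))_j for all i ≥ 0. -/

import Mathlib

open MvPolynomial TensorProduct CategoryTheory

noncomputable section

/-- The polynomial ring `S = K[x_1,...,x_n]`, standard graded. -/
abbrev PS (K : Type) [Field K] (n : ℕ) : Type := MvPolynomial (Fin n) K

variable (K : Type) [Field K] (n : ℕ)

/-- An ideal of `S` is homogeneous if it contains all homogeneous components of its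
elements. -/
def IsHomog (I : Ideal (PS K n)) : Prop :=
  ∀ f ∈ I, ∀ d : ℕ, MvPolynomial.homogeneousComponent d f ∈ I

/-- The change of coordinates of `S` induced by `g ∈ GL_n(K)`, determined by
`g(x_i) = ∑_j g_{ji} x_j`. -/
def coordChange (g : GL (Fin n) K) : PS K n →ₐ[K] PS K n :=
  MvPolynomial.aeval (fun i => ∑ j, ((g : Matrix (Fin n) (Fin n) K) j i) • MvPolynomial.X j)

/-- A property `P` holds for a general change of coordinates `g ∈ GL_n(K)` if there is a
nonempty Zariski open subset `U ⊆ GL_n(K)` on which it holds; equivalently (as `GL_n(K)` is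
an irreducible variety over the infinite field `K`) there is a nonzero polynomial `F` in the
matrix entries such that `P g` holds whenever `F` does not vanish at `g`. -/
def generally (P : GL (Fin n) K → Prop) : Prop :=
  ∃ F : MvPolynomial (Fin n × Fin n) K, F ≠ 0 ∧
    ∀ g : GL (Fin n) K,
      MvPolynomial.eval (fun p => (g : Matrix (Fin n) (Fin n) K) p.1 p.2) F ≠ 0 → P g

/-- The standard grading of `S = K[x_1,...,x_n]`, extended to `ℤ` (zero in negative
degrees). -/
def polyGrade (d : ℤ) : Submodule K (PS K n) :=
  if 0 ≤ d then homogeneousSubmodule (Fin n) K d.toNat else ⊥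

/-- The degree `d` component of the (internal) tensor-product grading on `A ⊗[K] B`. -/
def tensorGrade {A B : Type} [AddCommGroup A] [Module K A] [AddCommGroup B] [Module K B]
    (GA : ℤ → Submodule K A) (GB : ℤ → Submodule K B) (d : ℤ) :
    Submodule K (A ⊗[K] B) :=
  ⨆ p : ℤ, LinearMap.range (TensorProduct.map (GA p).subtype (GB (d - p)).subtype)

variable (N : Type) [AddCommGroup N] [Module K N] [Module (PS K n) N]
  [IsScalarTower K (PS K n) N]

/-- The tower of `K`-vector spaces `D_i = S^{⊗ i} ⊗_K N` appearing in the bar complex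
`M ⊗_K S^{⊗ i} ⊗_K N`, which computes `Tor^S_i(M, N)`. -/
def barD : ℕ → ModuleCat K
  | 0 => ModuleCat.of K N
  | (i + 1) => ModuleCat.of K (PS K n ⊗[K] (barD i))

/-- The internal `ℤ`-grading on `D_i = S^{⊗ i} ⊗_K N` induced by the standard grading of
`S` and a grading `GN` of `N`. -/
def barDGrade (GN : ℤ → Submodule K N) : (i : ℕ) → ℤ → Submodule K (barD K n N i)
  | 0 => GN
  | (i + 1) => tensorGrade K (polyGrade K n) (barDGrade GN i)

/-- Scalar multiplication `S → N → N` as a `K`-bilinear map. -/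
def smulBilin : PS K n →ₗ[K] N →ₗ[K] N :=
  LinearMap.mk₂ K (fun s x => s • x)
    (fun s₁ s₂ x => add_smul s₁ s₂ x)
    (fun c s x => smul_assoc c s x)
    (fun s x y => smul_add s x y)
    (fun c s x => (smul_comm c s x).symm)

/-- The "contraction" part of the bar differential, `c_i : D_{i+1} → D_i`, defined
recursively by `c_0(s ⊗ x) = s • x` and
`c_{i+1}(s ⊗ s' ⊗ t) = (s s') ⊗ t - s ⊗ c_i(s' ⊗ t)`. -/
def barC : (i : ℕ) → ((barD K n N (i + 1)) →ₗ[K] (barD K n N i))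
  | 0 => TensorProduct.lift (smulBilin K n N)
  | (i + 1) =>
      (TensorProduct.map (LinearMap.mul' K (PS K n)) LinearMap.id).comp
        (TensorProduct.assoc K (PS K n) (PS K n) (barD K n N i)).symm.toLinearMap
      - TensorProduct.map LinearMap.id (barC i)

variable (M : Type) [AddCommGroup M] [Module K M] [Module (PS K n) M]
  [IsScalarTower K (PS K n) M]

/-- Right scalar multiplication `M ⊗[K] S → M` as a `K`-linear map. -/
def smulMapM : M ⊗[K] PS K n →ₗ[K] M :=
  TensorProduct.lift (LinearMap.mk₂ K (fun m s => s • m)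
    (fun m₁ m₂ s => smul_add s m₁ m₂)
    (fun c m s => smul_comm s c m)
    (fun m s₁ s₂ => add_smul s₁ s₂ m)
    (fun c m s => smul_assoc c s m))

/-- The bar differential `b_i : M ⊗ D_{i+1} → M ⊗ D_i`,
`b(m ⊗ s ⊗ t) = (s • m) ⊗ t - m ⊗ c_i(s ⊗ t)`.  The complex
`⋯ → M ⊗_K S^{⊗ i} ⊗_K N → ⋯ → M ⊗_K S ⊗_K N → M ⊗_K N → 0`
is the bar complex `M ⊗_S Bar(S, N)`, whose `i`-th homology is `Tor^S_i(M, N)`;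
it is a complex of graded vector spaces with degree-preserving differentials. -/
def barB (i : ℕ) : (M ⊗[K] (barD K n N (i + 1))) →ₗ[K] (M ⊗[K] (barD K n N i)) :=
  (TensorProduct.map (smulMapM K n M) LinearMap.id).comp
      (TensorProduct.assoc K M (PS K n) (barD K n N i)).symm.toLinearMap
  - TensorProduct.map LinearMap.id (barC K n N i)

/-- `dim_K Tor_i^S(M, N)_j`, the dimension of the degree-`j` component of the graded module
`Tor_i^S(M, N)` for graded modules `M`, `N`: it is computed as the homology of the degree-`j`
strand of the bar complex, namely `dim (ker b_i)_j - dim (im b_{i+1})_j`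
(for `i = 0`, `dim (M ⊗_K N)_j - dim (im b_1)_j`). -/
def torStrandDim (GM : ℤ → Submodule K M) (GN : ℤ → Submodule K N) : ℕ → ℤ → ℕ
  | 0, j =>
      Module.finrank K ↥(tensorGrade K GM (barDGrade K n N GN 0) j) -
        Module.finrank K
          ↥(LinearMap.range (barB K n N M 0) ⊓ tensorGrade K GM (barDGrade K n N GN 0) j)
  | (i + 1), j =>
      Module.finrank K
          ↥(LinearMap.ker (barB K n N M i) ⊓
              tensorGrade K GM (barDGrade K n N GN (i + 1)) j) -
        Module.finrank K
          ↥(LinearMap.range (barB K n N M (i + 1)) ⊓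
              tensorGrade K GM (barDGrade K n N GN (i + 1)) j)

/-- The quotient grading on `S/J`. -/
def quotGrade (J : Ideal (PS K n)) : ℤ → Submodule K (PS K n ⧸ J) := fun d =>
  (polyGrade K n d).map (Ideal.Quotient.mkₐ K J).toLinearMap

/-- The grading on an ideal `I ⊆ S` viewed as an `S`-module. -/
def idealGrade (I : Ideal (PS K n)) : ℤ → Submodule K ↥I := fun d =>
  (polyGrade K n d).comap ((Submodule.subtype I).restrictScalars K)

/-- `dim_K Tor_i^S(S/I, S/J)_j`. -/
def torQQ (I J : Ideal (PS K n)) (i : ℕ) (j : ℤ) : ℕ :=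
  torStrandDim K n (PS K n ⧸ J) (PS K n ⧸ I) (quotGrade K n I) (quotGrade K n J) i j

/-- `dim_K Tor_i^S(I, S/J)_j`. -/
def torIQ (I J : Ideal (PS K n)) (i : ℕ) (j : ℤ) : ℕ :=
  torStrandDim K n (PS K n ⧸ J) ↥I (idealGrade K n I) (quotGrade K n J) i j

/-- `a <_lex b` for the lexicographic order induced by `x_1 > x_2 > ⋯ > x_n`. -/
def lexLt (a b : Fin n →₀ ℕ) : Prop := Finsupp.Lex (· < ·) (· < ·) a b

/-- `a <_oplex b` for the (opposite) lexicographic order induced by `x_n > ⋯ > x_1`. -/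
def oplexLt (a b : Fin n →₀ ℕ) : Prop := Finsupp.Lex (· > ·) (· < ·) a b

/-- The total degree of an exponent vector. -/
def expDeg (m : Fin n →₀ ℕ) : ℕ := ∑ i, m i

/-- A monomial ideal: together with any polynomial it contains each of its monomials. -/
def IsMonomialIdeal (I : Ideal (PS K n)) : Prop :=
  ∀ f ∈ I, ∀ m ∈ f.support, MvPolynomial.monomial m (1 : K) ∈ I

/-- A lex ideal: a monomial ideal whose monomials form a lex set. -/
def IsLexIdeal (I : Ideal (PS K n)) : Prop :=
  IsMonomialIdeal K n I ∧ ∀ u v : Fin n →₀ ℕ, expDeg n u = expDeg n v →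
    MvPolynomial.monomial u (1 : K) ∈ I → lexLt n u v →
      MvPolynomial.monomial v (1 : K) ∈ I

/-- An opposite lex ideal: a monomial ideal whose monomials form an opposite lex set. -/
def IsOplexIdeal (I : Ideal (PS K n)) : Prop :=
  IsMonomialIdeal K n I ∧ ∀ u v : Fin n →₀ ℕ, expDeg n u = expDeg n v →
    MvPolynomial.monomial u (1 : K) ∈ I → oplexLt n u v →
      MvPolynomial.monomial v (1 : K) ∈ I

/-- The initial ideal `in_r(I)` of `I` with respect to a (strict) monomial order `r`:
the ideal generated by the `r`-maximal monomials of the nonzero elements of `I`. -/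
def initialIdealO (r : (Fin n →₀ ℕ) → (Fin n →₀ ℕ) → Prop) (I : Ideal (PS K n)) :
    Ideal (PS K n) :=
  Ideal.span {g | ∃ f ∈ I, ∃ m ∈ f.support,
    (∀ m' ∈ f.support, m' = m ∨ r m' m) ∧ g = MvPolynomial.monomial m (1 : K)}

section AuxOne

variable {K n}
variable {A B A' B' V W : Type} [AddCommGroup A] [Module K A] [AddCommGroup B] [Module K B]
  [AddCommGroup A'] [Module K A'] [AddCommGroup B'] [Module K B']
  [AddCommGroup V] [Module K V] [AddCommGroup W] [Module K W]

theorem tmul_mem_tensorGrade {GA : ℤ → Submodule K A} {GB : ℤ → Submodule K B} {p q d : ℤ}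
    (h : p + q = d) {a : A} {b : B} (ha : a ∈ GA p) (hb : b ∈ GB q) :
    a ⊗ₜ[K] b ∈ tensorGrade K GA GB d := by
  have hq : q = d - p := by omega
  subst hq
  exact Submodule.mem_iSup_of_mem p ⟨(⟨a, ha⟩ : GA p) ⊗ₜ (⟨b, hb⟩ : GB (d - p)), by simp⟩

theorem tensorGrade_le {GA : ℤ → Submodule K A} {GB : ℤ → Submodule K B} {d : ℤ}
    {U : Submodule K (A ⊗[K] B)}
    (h : ∀ p q, p + q = d → ∀ a ∈ GA p, ∀ b ∈ GB q, a ⊗ₜ[K] b ∈ U) :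
    tensorGrade K GA GB d ≤ U := by
  refine iSup_le fun p => ?_
  rintro _ ⟨x, rfl⟩
  induction x using TensorProduct.induction_on with
  | zero => simp
  | tmul a b => simpa using h p (d - p) (by omega) a a.2 b b.2
  | add x y hx hy => simpa using U.add_mem hx hy

theorem tensorGrade_mono {GA GA' : ℤ → Submodule K A} {GB GB' : ℤ → Submodule K B} {d : ℤ}
    (hA : ∀ p, GA p ≤ GA' p) (hB : ∀ p, GB p ≤ GB' p) :
    tensorGrade K GA GB d ≤ tensorGrade K GA' GB' d :=
  tensorGrade_le fun p _ h _ ha _ hb => tmul_mem_tensorGrade h (hA p ha) (hB _ hb)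

theorem tensorGrade_map (f : A →ₗ[K] A') (g : B →ₗ[K] B')
    (GA : ℤ → Submodule K A) (GB : ℤ → Submodule K B) (d : ℤ) :
    (tensorGrade K GA GB d).map (TensorProduct.map f g) =
      tensorGrade K (fun p => (GA p).map f) (fun p => (GB p).map g) d := by
  apply le_antisymm
  · rw [Submodule.map_le_iff_le_comap]
    refine tensorGrade_le fun p q h a ha b hb => ?_
    rw [Submodule.mem_comap, TensorProduct.map_tmul]
    exact tmul_mem_tensorGrade h ⟨a, ha, rfl⟩ ⟨b, hb, rfl⟩
  · refine tensorGrade_le ?_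
    rintro p q h _ ⟨a, ha, rfl⟩ _ ⟨b, hb, rfl⟩
    exact ⟨a ⊗ₜ b, tmul_mem_tensorGrade h ha hb, by simp⟩

theorem tensorGrade_neg {GA : ℤ → Submodule K A} {GB : ℤ → Submodule K B}
    (hA : ∀ p < 0, GA p = ⊥) (hB : ∀ p < 0, GB p = ⊥) {d : ℤ} (hd : d < 0) :
    tensorGrade K GA GB d = ⊥ := by
  rw [eq_bot_iff]
  refine tensorGrade_le fun p q h a ha b hb => ?_
  by_cases hp : p < 0
  · rw [hA p hp, Submodule.mem_bot] at ha; simp [ha]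
  · rw [hB q (by omega), Submodule.mem_bot] at hb; simp [hb]

theorem tensorGrade_finite {GA : ℤ → Submodule K A} {GB : ℤ → Submodule K B}
    (hA : ∀ p < 0, GA p = ⊥) (hB : ∀ p < 0, GB p = ⊥)
    (fA : ∀ p, FiniteDimensional K (GA p)) (fB : ∀ p, FiniteDimensional K (GB p)) (d : ℤ) :
    FiniteDimensional K (tensorGrade K GA GB d) := by
  have h : tensorGrade K GA GB d ≤ ⨆ p : Finset.Icc (0 : ℤ) d,
      LinearMap.range (TensorProduct.map (GA p).subtype (GB (d - p)).subtype) := by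
    refine tensorGrade_le fun p q h a ha b hb => ?_
    by_cases hp : p < 0
    · rw [hA p hp, Submodule.mem_bot] at ha; simp [ha]
    by_cases hq : q < 0
    · rw [hB q hq, Submodule.mem_bot] at hb; simp [hb]
    have hq' : q = d - p := by omega
    subst hq'
    refine Submodule.mem_iSup_of_mem (⟨p, by simp; omega⟩ : Finset.Icc (0 : ℤ) d) ?_
    exact ⟨(⟨a, ha⟩ : GA p) ⊗ₜ (⟨b, hb⟩ : GB (d - p)), by simp⟩
  exact Submodule.finiteDimensional_of_le h

/-- A polynomially parametrized family of vectors. -/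
inductive IsPF {σ : Type} {V : Type} [AddCommGroup V] [Module K V] : ((σ → K) → V) → Prop
  | base (F : MvPolynomial σ K) (w : V) : IsPF (fun a => eval a F • w)
  | add {u v : (σ → K) → V} : IsPF u → IsPF v → IsPF (fun a => u a + v a)

variable {σ : Type}

theorem IsPF.const (w : V) : IsPF (K := K) (fun _ : σ → K => w) := by
  simpa using IsPF.base (σ := σ) (1 : MvPolynomial σ K) w

theorem IsPF.map (f : V →ₗ[K] W) {v : (σ → K) → V} (h : IsPF v) : IsPF (fun a => f (v a)) := by
  induction h with
  | base F w => simpa using IsPF.base F (f w)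
  | add _ _ h1 h2 => simpa using h1.add h2

theorem IsPF.bilin (f : V →ₗ[K] W →ₗ[K] A) {v : (σ → K) → V} {w : (σ → K) → W}
    (h : IsPF v) (h' : IsPF w) : IsPF (fun a => f (v a) (w a)) := by
  induction h with
  | base F x =>
    induction h' with
    | base G y =>
      have := IsPF.base (G * F) (f x y)
      simpa [mul_smul] using this
    | add _ _ h1 h2 => simpa using h1.add h2
  | add _ _ h1 h2 => simpa using h1.add h2

theorem IsPF.sum {ι : Type} (s : Finset ι) {v : ι → (σ → K) → V} (h : ∀ i ∈ s, IsPF (v i)) :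
    IsPF (fun a => ∑ i ∈ s, v i a) := by
  classical
  induction s using Finset.induction_on with
  | empty => simpa using IsPF.const (σ := σ) (0 : V)
  | insert i s hi ih =>
    have := (h i (by simp)).add (ih fun k hk => h k (by simp [hk]))
    simpa [Finset.sum_insert hi] using this

theorem IsPF.poly {v : (σ → K) → K} (h : IsPF v) : ∃ F : MvPolynomial σ K, ∀ a, v a = eval a F := by
  induction h with
  | base F w => exact ⟨F * C w, by simp⟩
  | add _ _ h1 h2 =>
    obtain ⟨F, hF⟩ := h1
    obtain ⟨G, hG⟩ := h2
    exact ⟨F + G, by simp [hF, hG]⟩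

/-- Limits at `a0` of polynomial families lying in `W a` for `a ∈ G`. -/
def Lim (G : Set (σ → K)) (a0 : σ → K) (U : (σ → K) → Submodule K V) : Submodule K V where
  carrier := {w | ∃ v, IsPF v ∧ v a0 = w ∧ ∀ a ∈ G, v a ∈ U a}
  zero_mem' := ⟨fun _ => 0, IsPF.const _, rfl, fun _ _ => zero_mem _⟩
  add_mem' := by
    rintro _ _ ⟨v, hv, rfl, h⟩ ⟨w, hw, rfl, h'⟩
    exact ⟨_, hv.add hw, rfl, fun a ha => add_mem (h a ha) (h' a ha)⟩
  smul_mem' := by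
    rintro c _ ⟨v, hv, rfl, h⟩
    exact ⟨_, hv.map (c • LinearMap.id), rfl, fun a ha => Submodule.smul_mem _ _ (h a ha)⟩

theorem le_Lim_const (G : Set (σ → K)) (a0 : σ → K) (U : Submodule K V) :
    U ≤ Lim G a0 (fun _ => U) := fun w hw => ⟨fun _ => w, IsPF.const _, rfl, fun _ _ => hw⟩

theorem Lim_mono {G : Set (σ → K)} {a0 : σ → K} {U U' : (σ → K) → Submodule K V}
    (h : ∀ a ∈ G, U a ≤ U' a) : Lim G a0 U ≤ Lim G a0 U' := by
  rintro _ ⟨v, hv, rfl, hh⟩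
  exact ⟨v, hv, rfl, fun a ha => h a ha (hh a ha)⟩

theorem map_Lim_le {G : Set (σ → K)} {a0 : σ → K} {U : (σ → K) → Submodule K V}
    {U0 : Submodule K V} (h : U0 ≤ Lim G a0 U) (f : V →ₗ[K] W) :
    U0.map f ≤ Lim G a0 (fun a => (U a).map f) := by
  rintro _ ⟨x, hx, rfl⟩
  obtain ⟨v, hv, rfl, hh⟩ := h hx
  exact ⟨_, hv.map f, rfl, fun a ha => ⟨_, hh a ha, rfl⟩⟩

theorem sup_Lim_le {G : Set (σ → K)} {a0 : σ → K} {U U' : (σ → K) → Submodule K V}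
    {U0 U0' : Submodule K V} (h : U0 ≤ Lim G a0 U) (h' : U0' ≤ Lim G a0 U') :
    U0 ⊔ U0' ≤ Lim G a0 (fun a => U a ⊔ U' a) :=
  sup_le (h.trans (Lim_mono fun _ _ => le_sup_left)) (h'.trans (Lim_mono fun _ _ => le_sup_right))

theorem tensorGrade_Lim_le {G : Set (σ → K)} {a0 : σ → K}
    {GA : (σ → K) → ℤ → Submodule K A} {GB : (σ → K) → ℤ → Submodule K B}
    {GA0 : ℤ → Submodule K A} {GB0 : ℤ → Submodule K B}
    (hA : ∀ p, GA0 p ≤ Lim G a0 (fun a => GA a p)) (hB : ∀ p, GB0 p ≤ Lim G a0 (fun a => GB a p))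
    (d : ℤ) :
    tensorGrade K GA0 GB0 d ≤ Lim G a0 (fun a => tensorGrade K (GA a) (GB a) d) := by
  refine tensorGrade_le fun p q h x hx y hy => ?_
  obtain ⟨v, hv, rfl, hh⟩ := hA p hx
  obtain ⟨w, hw, rfl, hh'⟩ := hB q hy
  exact ⟨_, hv.bilin (TensorProduct.mk K A B) hw, rfl,
    fun a ha => tmul_mem_tensorGrade h (hh a ha) (hh' a ha)⟩

theorem finrank_Lim {G : Set (σ → K)} {a0 : σ → K} {U : (σ → K) → Submodule K V}
    {U0 : Submodule K V} [FiniteDimensional K U0] (hU : ∀ a ∈ G, FiniteDimensional K (U a))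
    (h : U0 ≤ Lim G a0 U) :
    ∃ F : MvPolynomial σ K, eval a0 F ≠ 0 ∧ ∀ a ∈ G, eval a F ≠ 0 →
      Module.finrank K U0 ≤ Module.finrank K (U a) := by
  classical
  let b := Module.finBasis K U0
  have hb : ∀ k, ∃ v, IsPF v ∧ v a0 = (b k : V) ∧ ∀ a ∈ G, v a ∈ U a := fun k => h (b k).2
  choose v hv hv0 hvG using hb
  obtain ⟨π, hπ⟩ := LinearMap.exists_leftInverse_of_injective U0.subtype (by simp)
  have hπb : ∀ k, π (b k : V) = b k := fun k => LinearMap.congr_fun hπ (b k)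
  have hp : ∀ k l, ∃ F : MvPolynomial σ K, ∀ a, b.coord l (π (v k a)) = eval a F := fun k l =>
    ((hv k).map ((b.coord l).comp π)).poly
  choose F hF using hp
  refine ⟨Matrix.det (Matrix.of F), ?_, ?_⟩
  · rw [RingHom.map_det]
    have : (RingHom.mapMatrix (eval a0)) (Matrix.of F) = 1 := by
      ext k l
      simp only [RingHom.mapMatrix_apply, Matrix.map_apply, Matrix.of_apply]
      rw [← hF, hv0, hπb]
      simp [Matrix.one_apply, Finsupp.single_apply]
    rw [this]; simp
  · intro a ha hdet
    have := hU a ha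
    rw [RingHom.map_det] at hdet
    have hli := Matrix.linearIndependent_rows_of_det_ne_zero hdet
    have hli2 : LinearIndependent K (fun k => (⟨v k a, hvG k a ha⟩ : U a)) := by
      refine LinearIndependent.of_comp
        ((LinearMap.pi fun l => (b.coord l).comp π).comp (U a).subtype) ?_
      have hfun : ⇑((LinearMap.pi fun l => (b.coord l).comp π).comp (U a).subtype) ∘
          (fun k => (⟨v k a, hvG k a ha⟩ : U a)) =
          fun i => (RingHom.mapMatrix (eval a)) (Matrix.of F) i := by
        ext k l
        simp [← hF]
      rw [hfun]
      exact hli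
    simpa using hli2.fintype_card_le_finrank

end AuxOne

section AuxTwo

variable {K n}
variable {A B V : Type} [AddCommGroup A] [Module K A] [AddCommGroup B] [Module K B]
  [AddCommGroup V] [Module K V]

/-- The pure tensors of `barD (i+1)`. -/
def tmD {N : Type} [AddCommGroup N] [Module K N] (i : ℕ) :
    PS K n →ₗ[K] barD K n N i →ₗ[K] barD K n N (i + 1) :=
  TensorProduct.mk K (PS K n) (barD K n N i)

section Basic
variable {N : Type} [AddCommGroup N] [Module K N]

theorem barD_ext {i : ℕ} {f g : barD K n N (i + 1) →ₗ[K] V}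
    (h : ∀ s x, f (tmD i s x) = g (tmD i s x)) : f = g :=
  TensorProduct.ext' h

/-- The projection of `S` to its degree zero part. -/
def e0 : PS K n →ₗ[K] PS K n :=
  (Algebra.linearMap K (PS K n)).comp (MvPolynomial.lcoeff K (0 : Fin n →₀ ℕ))

theorem e0_apply (s : PS K n) : e0 s = coeff 0 s • (1 : PS K n) := by
  simp [e0, C_eq_smul_one]

theorem e0_one : e0 (1 : PS K n) = 1 := by
  simp [e0_apply]

theorem barD_ext' {i : ℕ} {f g : barD K n N (i + 1) →ₗ[K] V}
    (h1 : ∀ x, f (tmD i 1 x) = g (tmD i 1 x))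
    (h2 : ∀ s, e0 s = 0 → ∀ x, f (tmD i s x) = g (tmD i s x)) : f = g := by
  refine barD_ext fun s x => ?_
  have hs : s = coeff 0 s • (1 : PS K n) + (s - e0 s) := by rw [e0_apply]; abel
  have h0 : e0 (s - e0 s) = 0 := by
    rw [map_sub, sub_eq_zero]
    conv_rhs => rw [e0_apply s, map_smul, e0_one]
    rw [e0_apply]
  rw [hs]
  simp only [map_add, LinearMap.add_apply, map_smul, LinearMap.smul_apply, h1, h2 _ h0]

theorem tmD_mem {GN : ℤ → Submodule K N} {i : ℕ} {p q d : ℤ} (h : p + q = d) {s : PS K n}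
    {x : barD K n N i} (hs : s ∈ polyGrade K n p) (hx : x ∈ barDGrade K n N GN i q) :
    tmD i s x ∈ barDGrade K n N GN (i + 1) d :=
  tmul_mem_tensorGrade h hs hx

theorem barDGrade_succ_le {GN : ℤ → Submodule K N} {i : ℕ} {d : ℤ}
    {U : Submodule K (barD K n N (i + 1))}
    (h : ∀ p q, p + q = d → ∀ s ∈ polyGrade K n p, ∀ x ∈ barDGrade K n N GN i q, tmD i s x ∈ U) :
    barDGrade K n N GN (i + 1) d ≤ U :=
  tensorGrade_le h

/-- Functoriality of `barD`. -/
def Dmap {N' : Type} [AddCommGroup N'] [Module K N'] (φ : PS K n →ₗ[K] PS K n)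
    (β : N →ₗ[K] N') : (i : ℕ) → (barD K n N i →ₗ[K] barD K n N' i)
  | 0 => β
  | (i + 1) => TensorProduct.map φ (Dmap φ β i)

variable {N' N'' : Type} [AddCommGroup N'] [Module K N'] [AddCommGroup N''] [Module K N'']

theorem Dmap_tmD (φ : PS K n →ₗ[K] PS K n) (β : N →ₗ[K] N') (i : ℕ) (s : PS K n)
    (x : barD K n N i) : Dmap φ β (i + 1) (tmD i s x) = tmD i (φ s) (Dmap φ β i x) := rfl

theorem Dmap_comp (φ ψ : PS K n →ₗ[K] PS K n) (β : N →ₗ[K] N') (γ : N' →ₗ[K] N'') (i : ℕ) :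
    (Dmap ψ γ i).comp (Dmap φ β i) = Dmap (ψ.comp φ) (γ.comp β) i := by
  induction i with
  | zero => rfl
  | succ i ih =>
    refine barD_ext fun s x => ?_
    simp only [LinearMap.comp_apply, Dmap_tmD]
    rw [← ih]; rfl

theorem Dmap_id (i : ℕ) : Dmap (LinearMap.id : PS K n →ₗ[K] _) (LinearMap.id : N →ₗ[K] N) i
    = LinearMap.id := by
  induction i with
  | zero => rfl
  | succ i ih =>
    refine barD_ext fun s x => ?_
    simp only [Dmap_tmD, ih, LinearMap.id_apply]

theorem Dmap_add (φ : PS K n →ₗ[K] PS K n) (β γ : N →ₗ[K] N') (i : ℕ) :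
    Dmap φ (β + γ) i = Dmap φ β i + Dmap φ γ i := by
  induction i with
  | zero => rfl
  | succ i ih =>
    refine barD_ext fun s x => ?_
    simp only [Dmap_tmD, ih, LinearMap.add_apply, map_add]

theorem Dmap_zero (φ : PS K n →ₗ[K] PS K n) (i : ℕ) :
    Dmap φ (0 : N →ₗ[K] N') i = 0 := by
  induction i with
  | zero => rfl
  | succ i ih =>
    refine barD_ext fun s x => ?_
    simp only [Dmap_tmD, ih, LinearMap.zero_apply, map_zero]

theorem barDGrade_map (φ : PS K n →ₗ[K] PS K n) (β : N →ₗ[K] N')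
    (hφ : ∀ p, (polyGrade K n p).map φ = polyGrade K n p) (GN : ℤ → Submodule K N) (i : ℕ) :
    ∀ d, (barDGrade K n N GN i d).map (Dmap φ β i) =
      barDGrade K n N' (fun p => (GN p).map β) i d := by
  induction i with
  | zero => intro d; rfl
  | succ i ih =>
    intro d
    have := tensorGrade_map φ (Dmap φ β i) (polyGrade K n) (barDGrade K n N GN i) d
    simp only [hφ, ih] at this
    exact this

theorem barDGrade_mono {GN GN' : ℤ → Submodule K N} (h : ∀ p, GN p ≤ GN' p) (i : ℕ) :
    ∀ d, barDGrade K n N GN i d ≤ barDGrade K n N GN' i d := by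
  induction i with
  | zero => exact h
  | succ i ih => exact fun d => tensorGrade_mono (fun _ => le_rfl) ih

theorem barDGrade_Lim_le {σ : Type} {G : Set (σ → K)} {a0 : σ → K}
    {GN : (σ → K) → ℤ → Submodule K N} {GN0 : ℤ → Submodule K N}
    (h : ∀ p, GN0 p ≤ Lim G a0 (fun a => GN a p)) (i : ℕ) :
    ∀ d, barDGrade K n N GN0 i d ≤ Lim G a0 (fun a => barDGrade K n N (GN a) i d) := by
  induction i with
  | zero => exact h
  | succ i ih => exact tensorGrade_Lim_le (fun p => le_Lim_const _ _ _) ih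

theorem polyGrade_neg {p : ℤ} (hp : p < 0) : polyGrade K n p = ⊥ := by
  rw [polyGrade, if_neg (by omega)]

theorem polyGrade_nat (d : ℕ) : polyGrade K n d = homogeneousSubmodule (Fin n) K d := by
  simp [polyGrade]

theorem polyGrade_finite (p : ℤ) : FiniteDimensional K (polyGrade K n p) := by
  by_cases hp : 0 ≤ p
  · rw [polyGrade, if_pos hp]
    have : homogeneousSubmodule (Fin n) K p.toNat ≤ restrictTotalDegree (Fin n) K p.toNat := by
      intro f hf
      rw [mem_restrictTotalDegree]
      exact IsHomogeneous.totalDegree_le hf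
    exact Submodule.finiteDimensional_of_le this
  · rw [polyGrade, if_neg hp]
    infer_instance

theorem barDGrade_neg {GN : ℤ → Submodule K N} (h : ∀ p < 0, GN p = ⊥) (i : ℕ) :
    ∀ p < 0, barDGrade K n N GN i p = ⊥ := by
  induction i with
  | zero => exact h
  | succ i ih => exact fun d hd => tensorGrade_neg (fun p hp => polyGrade_neg hp) ih hd

theorem barDGrade_finite {GN : ℤ → Submodule K N} (h : ∀ p < 0, GN p = ⊥)
    (hf : ∀ p, FiniteDimensional K (GN p)) (i : ℕ) :
    ∀ p, FiniteDimensional K (barDGrade K n N GN i p) := by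
  induction i with
  | zero => exact hf
  | succ i ih =>
    exact fun d => tensorGrade_finite (GA := polyGrade K n) (fun p hp => polyGrade_neg hp)
      (barDGrade_neg h i) polyGrade_finite ih d

theorem polyGrade_mul {p q : ℤ} {s t : PS K n} (hs : s ∈ polyGrade K n p)
    (ht : t ∈ polyGrade K n q) : s * t ∈ polyGrade K n (p + q) := by
  by_cases hp : p < 0
  · rw [polyGrade_neg hp, Submodule.mem_bot] at hs; simp [hs]
  by_cases hq : q < 0
  · rw [polyGrade_neg hq, Submodule.mem_bot] at ht; simp [ht]
  obtain ⟨a, rfl⟩ := Int.eq_ofNat_of_zero_le (not_lt.mp hp)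
  obtain ⟨b, rfl⟩ := Int.eq_ofNat_of_zero_le (not_lt.mp hq)
  rw [← Nat.cast_add, polyGrade_nat] at *
  exact IsHomogeneous.mul hs ht

theorem e0_of_pos {p : ℤ} (hp : 0 < p) {s : PS K n} (hs : s ∈ polyGrade K n p) : e0 s = 0 := by
  obtain ⟨a, rfl⟩ := Int.eq_ofNat_of_zero_le hp.le
  rw [polyGrade_nat] at hs
  have : coeff 0 s = 0 := by
    apply IsHomogeneous.coeff_eq_zero hs
    simp; omega
  simp [e0_apply, this]

theorem e0_of_zero {s : PS K n} (hs : s ∈ polyGrade K n 0) : e0 s = s := by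
  have hs' : s ∈ homogeneousSubmodule (Fin n) K 0 := by simpa [polyGrade] using hs
  have h : s.IsHomogeneous 0 := hs'
  rw [← totalDegree_zero_iff_isHomogeneous, totalDegree_eq_zero_iff_eq_C] at h
  rw [e0_apply]
  conv_rhs => rw [h]
  rw [C_eq_smul_one]

/-- Existence of projections to graded components. -/
def HasProj (GA : ℤ → Submodule K A) : Prop :=
  (∀ p < 0, GA p = ⊥) ∧ (⨆ p, GA p = ⊤) ∧
    ∀ p, ∃ f : A →ₗ[K] A, (∀ x ∈ GA p, f x = x) ∧ ∀ q, q ≠ p → ∀ x ∈ GA q, f x = 0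

theorem HasProj.tensor {GA : ℤ → Submodule K A} {GB : ℤ → Submodule K B} (hA : HasProj GA)
    (hB : HasProj GB) : HasProj (tensorGrade K GA GB) := by
  obtain ⟨nA, tA, pA⟩ := hA
  obtain ⟨nB, tB, pB⟩ := hB
  refine ⟨fun d hd => tensorGrade_neg nA nB hd, ?_, ?_⟩
  · rw [eq_top_iff, ← TensorProduct.span_tmul_eq_top, Submodule.span_le]
    rintro _ ⟨a, b, rfl⟩
    have ha : a ∈ ⨆ p, GA p := by rw [tA]; trivial
    have hb : b ∈ ⨆ p, GB p := by rw [tB]; trivial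
    simp only [SetLike.mem_coe]
    induction ha using Submodule.iSup_induction' with
    | mem p a ha =>
      induction hb using Submodule.iSup_induction' with
      | mem q b hb => exact Submodule.mem_iSup_of_mem (p + q) (tmul_mem_tensorGrade rfl ha hb)
      | zero => simp
      | add x y _ _ hx hy => rw [TensorProduct.tmul_add]; exact add_mem hx hy
    | zero => simp
    | add x y _ _ hx hy => rw [TensorProduct.add_tmul]; exact add_mem hx hy
  · intro d
    choose f hf hf0 using pA
    choose g hg hg0 using pB
    refine ⟨∑ p ∈ Finset.Icc 0 d, TensorProduct.map (f p) (g (d - p)), ?_, ?_⟩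
    · have : tensorGrade K GA GB d ≤ LinearMap.eqLocus
          (∑ p ∈ Finset.Icc 0 d, TensorProduct.map (f p) (g (d - p))) LinearMap.id := by
        refine tensorGrade_le fun p q h a ha b hb => ?_
        rw [LinearMap.mem_eqLocus]
        by_cases hp : p < 0
        · rw [nA p hp, Submodule.mem_bot] at ha; simp [ha]
        by_cases hq : q < 0
        · rw [nB q hq, Submodule.mem_bot] at hb; simp [hb]
        rw [LinearMap.sum_apply, Finset.sum_eq_single p]
        · have hq' : d - p = q := by omega
          simp [hq', hf p a ha, hg q b hb]
        · intro p' _ hne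
          simp [hf0 p' p hne.symm a ha]
        · intro hh; simp at hh; omega
      exact fun x hx => this hx
    · intro e hed
      have : tensorGrade K GA GB e ≤ LinearMap.eqLocus
          (∑ p ∈ Finset.Icc 0 d, TensorProduct.map (f p) (g (d - p))) 0 := by
        refine tensorGrade_le fun p q h a ha b hb => ?_
        rw [LinearMap.mem_eqLocus]
        rw [LinearMap.sum_apply]
        refine Finset.sum_eq_zero fun p' _ => ?_
        by_cases hpp : p = p'
        · subst hpp
          simp [hg0 (d - p) q (by omega) b hb]
        · simp [hf0 p' p hpp a ha]
      exact fun x hx => this hx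

theorem HasProj.poly : HasProj (polyGrade K n) := by
  refine ⟨fun p hp => polyGrade_neg hp, ?_, ?_⟩
  · rw [eq_top_iff]
    intro f _
    rw [← sum_homogeneousComponent f]
    refine Submodule.sum_mem _ fun d _ => Submodule.mem_iSup_of_mem (d : ℤ) ?_
    rw [polyGrade_nat]
    exact homogeneousComponent_isHomogeneous d f
  · intro p
    by_cases hp : p < 0
    · refine ⟨0, fun x hx => ?_, fun _ _ _ _ => rfl⟩
      rw [polyGrade_neg hp, Submodule.mem_bot] at hx; simp [hx]
    obtain ⟨a, rfl⟩ := Int.eq_ofNat_of_zero_le (not_lt.mp hp)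
    refine ⟨homogeneousComponent a, fun x hx => ?_, fun q hq x hx => ?_⟩
    · rw [polyGrade_nat] at hx
      rw [homogeneousComponent_of_mem hx, if_pos rfl]
    · by_cases hq0 : q < 0
      · rw [polyGrade_neg hq0, Submodule.mem_bot] at hx; simp [hx]
      obtain ⟨b, rfl⟩ := Int.eq_ofNat_of_zero_le (not_lt.mp hq0)
      rw [polyGrade_nat] at hx
      rw [homogeneousComponent_of_mem hx, if_neg]
      intro hh; apply hq; rw [hh]

theorem HasProj.bar {GN : ℤ → Submodule K N} (h : HasProj GN) (i : ℕ) :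
    HasProj (barDGrade K n N GN i) := by
  induction i with
  | zero => exact h
  | succ i ih => exact HasProj.poly.tensor ih

theorem HasProj.range_inf {GA : ℤ → Submodule K A} {GB : ℤ → Submodule K B} (hA : HasProj GA)
    (hB : HasProj GB) (f : A →ₗ[K] B) (hf : ∀ p, GA p ≤ (GB p).comap f) (d : ℤ) :
    LinearMap.range f ⊓ GB d = (GA d).map f := by
  apply le_antisymm
  · rintro _ ⟨⟨z, rfl⟩, hz⟩
    obtain ⟨π, hπ, hπ0⟩ := hA.2.2 d
    obtain ⟨ψ, hψ, hψ0⟩ := hB.2.2 d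
    have h1 : ∀ z, ψ (f z) = f (π z) ∧ π z ∈ GA d := by
      intro z
      have hzz : z ∈ ⨆ p, GA p := by rw [hA.2.1]; trivial
      clear hz
      induction hzz using Submodule.iSup_induction' with
      | mem p z hz =>
        by_cases h : p = d
        · subst h
          rw [hπ z hz, hψ _ (hf p hz)]
          exact ⟨rfl, hz⟩
        · rw [hπ0 p h z hz, hψ0 p h _ (hf p hz)]
          simp
      | zero => simp
      | add x y _ _ hx hy => simp [hx.1, hy.1, add_mem hx.2 hy.2]
    rw [← hψ _ hz, (h1 z).1]
    exact ⟨_, (h1 z).2, rfl⟩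
  · rw [Submodule.map_le_iff_le_comap]
    exact fun x hx => ⟨⟨x, rfl⟩, hf d hx⟩

theorem finrank_ker_inf (f : A →ₗ[K] B) (C : Submodule K A) [FiniteDimensional K C] :
    Module.finrank K ↥(LinearMap.ker f ⊓ C) + Module.finrank K ↥(C.map f) =
      Module.finrank K C := by
  rw [← LinearMap.finrank_range_add_finrank_ker (f.domRestrict C), add_comm]
  congr 1
  · rw [LinearMap.range_domRestrict]
  · have : (LinearMap.ker (f.domRestrict C)).map C.subtype = LinearMap.ker f ⊓ C := by
      ext x
      simp [Submodule.mem_map, and_comm]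
    rw [← this]
    exact (Submodule.equivMapOfInjective C.subtype C.injective_subtype
      (LinearMap.ker (f.domRestrict C))).finrank_eq.symm

end Basic

end AuxTwo

section AuxThree

variable {K n}
set_option linter.unusedSectionVars false
variable {N : Type} [AddCommGroup N] [Module K N] [Module (PS K n) N] [IsScalarTower K (PS K n) N]
variable {M : Type} [AddCommGroup M] [Module K M] [Module (PS K n) M] [IsScalarTower K (PS K n) M]
variable {N' : Type} [AddCommGroup N'] [Module K N'] [Module (PS K n) N']
  [IsScalarTower K (PS K n) N']
variable {M' : Type} [AddCommGroup M'] [Module K M'] [Module (PS K n) M']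
  [IsScalarTower K (PS K n) M']

theorem barC_zero (s : PS K n) (x : N) : barC K n N 0 (tmD (N := N) 0 s x) = s • x := rfl

theorem barC_one_zero (x : N) : barC K n N 0 (tmD (N := N) 0 1 x) = x :=
  one_smul (PS K n) x

theorem barC_succ (i : ℕ) (s s' : PS K n) (x : barD K n N i) :
    barC K n N (i + 1) (tmD (i + 1) s (tmD i s' x)) =
      tmD i (s * s') x - tmD i s (barC K n N i (tmD i s' x)) := rfl

theorem barB_tmul (i : ℕ) (m : M) (s : PS K n) (x : barD K n N i) :
    barB K n N M i (m ⊗ₜ[K] tmD i s x) =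
      (s • m) ⊗ₜ[K] x - m ⊗ₜ[K] barC K n N i (tmD i s x) := rfl

theorem tensorD_ext {V : Type} [AddCommGroup V] [Module K V] {i : ℕ}
    {f g : M ⊗[K] barD K n N (i + 1) →ₗ[K] V}
    (h : ∀ m s x, f (m ⊗ₜ tmD i s x) = g (m ⊗ₜ tmD i s x)) : f = g := by
  refine TensorProduct.ext ?_
  refine LinearMap.ext fun m => ?_
  exact barD_ext fun s x => h m s x

theorem tensorD_ext' {V : Type} [AddCommGroup V] [Module K V] {i : ℕ}
    {f g : M ⊗[K] barD K n N (i + 1) →ₗ[K] V}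
    (h : ∀ m x, f (m ⊗ₜ tmD i 1 x) = g (m ⊗ₜ tmD i 1 x))
    (h' : ∀ m s, e0 s = 0 → ∀ x, f (m ⊗ₜ tmD i s x) = g (m ⊗ₜ tmD i s x)) : f = g := by
  refine TensorProduct.ext ?_
  refine LinearMap.ext fun m => ?_
  exact barD_ext' (fun x => h m x) (fun s hs x => h' m s hs x)

theorem barC_nat (φ : PS K n →ₐ[K] PS K n) (β : N →ₗ[K] N') (hβ : ∀ s x, β (s • x) = φ s • β x)
    (i : ℕ) : (Dmap φ.toLinearMap β i).comp (barC K n N i) =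
      (barC K n N' i).comp (Dmap φ.toLinearMap β (i + 1)) := by
  induction i with
  | zero => exact barD_ext fun s x => hβ s x
  | succ i ih =>
    refine barD_ext fun s x => ?_
    suffices h : ((Dmap φ.toLinearMap β (i + 1)).comp (barC K n N (i + 1))).comp (tmD (i + 1) s) =
        ((barC K n N' (i + 1)).comp (Dmap φ.toLinearMap β (i + 1 + 1))).comp (tmD (i + 1) s) from
      LinearMap.congr_fun h x
    refine barD_ext fun s' x => ?_
    have h1 : Dmap φ.toLinearMap β i (barC K n N i (tmD i s' x)) =
        barC K n N' i (Dmap φ.toLinearMap β (i + 1) (tmD i s' x)) := LinearMap.congr_fun ih _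
    simp only [LinearMap.comp_apply, barC_succ, Dmap_tmD, map_sub, h1, AlgHom.toLinearMap_apply,
      map_mul]

theorem barB_nat (φ : PS K n →ₐ[K] PS K n) (α : M →ₗ[K] M') (β : N →ₗ[K] N')
    (hα : ∀ s x, α (s • x) = φ s • α x)
    (hβ : ∀ s x, β (s • x) = φ s • β x) (i : ℕ) :
    (TensorProduct.map α (Dmap φ.toLinearMap β i)).comp (barB K n N M i) =
      (barB K n N' M' i).comp (TensorProduct.map α (Dmap φ.toLinearMap β (i + 1))) := by
  refine tensorD_ext fun m s x => ?_
  have h1 : Dmap φ.toLinearMap β i (barC K n N i (tmD i s x)) =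
      barC K n N' i (Dmap φ.toLinearMap β (i + 1) (tmD i s x)) :=
    LinearMap.congr_fun (barC_nat φ β hβ i) _
  simp only [LinearMap.comp_apply, barB_tmul, TensorProduct.map_tmul, map_sub, h1, Dmap_tmD,
    AlgHom.toLinearMap_apply, hα]

/-- The compatibility of a grading with the `S`-action. -/
def GradedAct (GN : ℤ → Submodule K N) : Prop :=
  ∀ p q, ∀ s ∈ polyGrade K n p, ∀ x ∈ GN q, s • x ∈ GN (p + q)

theorem barC_graded {GN : ℤ → Submodule K N} (h : GradedAct (n := n) GN) (i : ℕ) :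
    ∀ d, barDGrade K n N GN (i + 1) d ≤ (barDGrade K n N GN i d).comap (barC K n N i) := by
  induction i with
  | zero =>
    refine fun d => barDGrade_succ_le fun p q hpq s hs x hx => ?_
    subst hpq
    exact h p q s hs x hx
  | succ i ih =>
    refine fun d => barDGrade_succ_le fun p q hpq s hs x hx => ?_
    suffices hh : barDGrade K n N GN (i + 1) q ≤
        ((barDGrade K n N GN (i + 1) d).comap (barC K n N (i + 1))).comap (tmD (i + 1) s) from hh hx
    refine barDGrade_succ_le fun p' q' hpq' s' hs' y hy => ?_
    simp only [Submodule.mem_comap, barC_succ]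
    refine sub_mem (tmD_mem (p := p + p') (q := q') (by omega) (polyGrade_mul hs hs') hy) ?_
    exact tmD_mem hpq hs (ih q (tmD_mem hpq' hs' hy))

theorem barB_graded {GM : ℤ → Submodule K M} {GN : ℤ → Submodule K N}
    (hM : GradedAct (n := n) GM) (hN : GradedAct (n := n) GN) (i : ℕ) (d : ℤ) :
    tensorGrade K GM (barDGrade K n N GN (i + 1)) d ≤
      (tensorGrade K GM (barDGrade K n N GN i) d).comap (barB K n N M i) := by
  refine tensorGrade_le fun p q hpq m hm x hx => ?_
  suffices hh : barDGrade K n N GN (i + 1) q ≤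
      ((tensorGrade K GM (barDGrade K n N GN i) d).comap (barB K n N M i)).comap
        (TensorProduct.mk K M (barD K n N (i + 1)) m) from hh hx
  refine barDGrade_succ_le fun p' q' hpq' s hs y hy => ?_
  simp only [Submodule.mem_comap, TensorProduct.mk_apply, barB_tmul]
  refine sub_mem (tmul_mem_tensorGrade (p := p' + p) (q := q') (by omega) (hM _ _ s hs m hm) hy) ?_
  exact tmul_mem_tensorGrade hpq hm (barC_graded hN i q (tmD_mem hpq' hs hy))

/-- The homotopy inserting a `1`. -/
def hD : (i : ℕ) → (barD K n N i →ₗ[K] barD K n N (i + 1))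
  | 0 => 0
  | (i + 1) => TensorProduct.map e0 (tmD i 1) - TensorProduct.map (LinearMap.id - e0) (hD i)

/-- The projection to degenerate tensors. -/
def pD : (i : ℕ) → (barD K n N i →ₗ[K] barD K n N i)
  | 0 => 0
  | (i + 1) => TensorProduct.map e0 LinearMap.id + TensorProduct.map (LinearMap.id - e0) (pD i)

theorem hD_succ (i : ℕ) (s : PS K n) (x : barD K n N i) :
    hD (i + 1) (tmD i s x) = tmD (i + 1) (e0 s) (tmD i 1 x) - tmD (i + 1) (s - e0 s) (hD i x) := rfl

theorem pD_succ (i : ℕ) (s : PS K n) (x : barD K n N i) :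
    pD (i + 1) (tmD i s x) = tmD i (e0 s) x + tmD i (s - e0 s) (pD i x) := rfl

theorem hD_one (i : ℕ) (x : barD K n N i) :
    hD (i + 1) (tmD i 1 x) = tmD (i + 1) 1 (tmD i 1 x) := by
  rw [hD_succ, e0_one, sub_self, map_zero, LinearMap.zero_apply, sub_zero]

theorem hD_pos (i : ℕ) {s : PS K n} (hs : e0 s = 0) (x : barD K n N i) :
    hD (i + 1) (tmD i s x) = - tmD (i + 1) s (hD i x) := by
  rw [hD_succ, hs, map_zero, LinearMap.zero_apply, zero_sub, sub_zero]

theorem pD_one (i : ℕ) (x : barD K n N i) :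
    pD (i + 1) (tmD i 1 x) = tmD i 1 x := by
  rw [pD_succ, e0_one, sub_self, map_zero, LinearMap.zero_apply, add_zero]

theorem pD_pos (i : ℕ) {s : PS K n} (hs : e0 s = 0) (x : barD K n N i) :
    pD (i + 1) (tmD i s x) = tmD i s (pD i x) := by
  rw [pD_succ, hs, map_zero, LinearMap.zero_apply, zero_add, sub_zero]

theorem e0_mul {s : PS K n} (hs : e0 s = 0) (t : PS K n) : e0 (s * t) = 0 := by
  rw [e0_apply] at hs ⊢
  have : coeff 0 s = 0 := by
    by_contra h
    exact (smul_ne_zero h one_ne_zero) hs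
  have h2 : coeff 0 (s * t) = coeff 0 s * coeff 0 t := by
    simp only [← constantCoeff_eq, map_mul]
  rw [h2, this]; simp

/-- `c(1 ⊗ x) = x - 1 ⊗ c x`. -/
theorem barC_one (i : ℕ) (x : barD K n N (i + 1)) :
    barC K n N (i + 1) (tmD (i + 1) 1 x) = x - tmD i 1 (barC K n N i x) := by
  suffices h : (barC K n N (i + 1)).comp (tmD (i + 1) 1) =
      LinearMap.id - (tmD i 1).comp (barC K n N i) from LinearMap.congr_fun h x
  refine barD_ext fun s y => ?_
  simp [barC_succ]

theorem barC_hD (i : ℕ) : ∀ (s : PS K n) (_ : e0 s = 0) (y : barD K n N i),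
    barC K n N (i + 1) (tmD (i + 1) s (hD i y)) - hD i (barC K n N i (tmD i s y)) =
      tmD i s (pD i y) := by
  induction i with
  | zero =>
    intro s hs y
    have h1 : (hD 0 : barD K n N 0 →ₗ[K] _) = 0 := rfl
    have h2 : (pD 0 : barD K n N 0 →ₗ[K] _) = 0 := rfl
    simp [h1, h2]
  | succ i ih =>
    intro s hs y
    suffices h : (barC K n N (i + 2)).comp ((tmD (i + 2) s).comp (hD (i + 1))) -
        (hD (i + 1)).comp ((barC K n N (i + 1)).comp (tmD (i + 1) s)) =
        (tmD (i + 1) s).comp (pD (i + 1)) from LinearMap.congr_fun h y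
    refine barD_ext' (fun z => ?_) (fun s' hs' z => ?_)
    · simp only [LinearMap.sub_apply, LinearMap.comp_apply, hD_one, pD_one, barC_succ, mul_one,
        map_sub, hD_pos i hs]
      cases i with
      | zero =>
        have h1 : (hD 0 : barD K n N 0 →ₗ[K] _) = 0 := rfl
        have h3 : barC K n N 0 (tmD 0 1 z) = z := barC_one_zero _
        simp [h1, h3]
      | succ i =>
        simp only [barC_one, map_sub, hD_one]
        abel
    · have h1 := ih s' hs' z
      simp only [LinearMap.sub_apply, LinearMap.comp_apply, hD_pos i hs', pD_pos i hs', barC_succ,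
        map_sub, map_neg, hD_pos i (e0_mul hs s'), hD_pos i hs, ← h1]
      abel

theorem barB_homotopy (i : ℕ) :
    (barB K n N M (i + 1)).comp (TensorProduct.map LinearMap.id (hD (i + 1))) +
      (TensorProduct.map LinearMap.id (hD i)).comp (barB K n N M i) =
      TensorProduct.map LinearMap.id (pD (i + 1)) := by
  refine tensorD_ext' (fun m x => ?_) (fun m s hs x => ?_)
  · simp only [LinearMap.add_apply, LinearMap.comp_apply, TensorProduct.map_tmul, barB_tmul,
      LinearMap.id_apply, hD_one, pD_one, one_smul, map_sub, barC_one]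
    cases i with
    | zero =>
      have h1 : (hD 0 : barD K n N 0 →ₗ[K] _) = 0 := rfl
      have h3 : barC K n N 0 (tmD 0 1 x) = x := barC_one_zero _
      simp [h1, h3]
    | succ i =>
      simp only [barC_one, map_sub, hD_one, TensorProduct.tmul_sub]
      abel
  · have h1 := barC_hD i s hs x
    have h2 : barB K n N M (i + 1) (m ⊗ₜ[K] tmD (i + 1) s (hD i x)) =
      (s • m) ⊗ₜ[K] (hD i x) - m ⊗ₜ[K] barC K n N (i + 1) (tmD (i + 1) s (hD i x)) :=
      barB_tmul (i + 1) m s _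
    simp only [LinearMap.add_apply, LinearMap.comp_apply, TensorProduct.map_tmul, barB_tmul,
      LinearMap.id_apply, hD_pos i hs, pD_pos i hs, map_sub, ← h1, TensorProduct.tmul_sub,
      TensorProduct.tmul_neg, map_neg, h2]
    abel

theorem pD_eq {GN : ℤ → Submodule K N} (h : ∀ p < 0, GN p = ⊥) (i : ℕ) :
    ∀ d : ℤ, d < i → barDGrade K n N GN i d ≤ LinearMap.eqLocus (pD i) LinearMap.id := by
  induction i with
  | zero =>
    intro d hd
    have : barDGrade K n N GN 0 d = ⊥ := h d (by simpa using hd)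
    rw [this]; exact bot_le
  | succ i ih =>
    intro d hd
    refine barDGrade_succ_le fun p q hpq s hs x hx => ?_
    rw [LinearMap.mem_eqLocus, LinearMap.id_apply]
    rcases lt_trichotomy p 0 with hp | hp | hp
    · rw [polyGrade_neg hp, Submodule.mem_bot] at hs; simp [hs]
    · subst hp
      rw [pD_succ, e0_of_zero hs]; simp
    · rw [pD_pos i (e0_of_pos hp hs)]
      have : pD i x = x := ih q (by push_cast at hd; omega) hx
      rw [this]

/-- Dimension of the degree `j` strand. -/
def cdim (GM : ℤ → Submodule K M) (GN : ℤ → Submodule K N) (i : ℕ) (j : ℤ) : ℕ :=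
  Module.finrank K ↥(tensorGrade K GM (barDGrade K n N GN i) j)

/-- Rank of the differential on the degree `j` strand. -/
def rdim (GM : ℤ → Submodule K M) (GN : ℤ → Submodule K N) (i : ℕ) (j : ℤ) : ℕ :=
  Module.finrank K ↥((tensorGrade K GM (barDGrade K n N GN (i + 1)) j).map (barB K n N M i))

theorem tor_zero_eq {GM : ℤ → Submodule K M} {GN : ℤ → Submodule K N}
    (hM : GradedAct (n := n) GM) (hN : GradedAct (n := n) GN) (pM : HasProj GM) (pN : HasProj GN)
    (j : ℤ) : torStrandDim K n N M GM GN 0 j = cdim (n := n) GM GN 0 j - rdim (n := n) GM GN 0 j := by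
  have h := (pM.tensor (pN.bar (n := n) 1)).range_inf (pM.tensor (pN.bar (n := n) 0))
    (barB K n N M 0) (barB_graded hM hN 0) j
  rw [torStrandDim, h]; rfl

theorem tor_succ_eq {GM : ℤ → Submodule K M} {GN : ℤ → Submodule K N}
    (hM : GradedAct (n := n) GM) (hN : GradedAct (n := n) GN) (pM : HasProj GM) (pN : HasProj GN)
    (fM : ∀ p, FiniteDimensional K (GM p)) (fN : ∀ p, FiniteDimensional K (GN p))
    (i : ℕ) (j : ℤ) : torStrandDim K n N M GM GN (i + 1) j =
      cdim (n := n) GM GN (i + 1) j - rdim (n := n) GM GN i j - rdim (n := n) GM GN (i + 1) j := by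
  have h := (pM.tensor (pN.bar (n := n) (i + 1 + 1))).range_inf (pM.tensor (pN.bar (n := n) (i + 1)))
    (barB K n N M (i + 1)) (barB_graded hM hN (i + 1)) j
  have hfin := tensorGrade_finite pM.1 (pN.bar (n := n) (i + 1)).1 fM
    (barDGrade_finite pN.1 fN (i + 1)) j
  have hk := finrank_ker_inf (barB K n N M i) (tensorGrade K GM (barDGrade K n N GN (i + 1)) j)
  rw [torStrandDim, h]
  simp only [cdim, rdim]
  omega

theorem tor_vanish {GM : ℤ → Submodule K M} {GN : ℤ → Submodule K N}
    (nM : ∀ p < 0, GM p = ⊥) (nN : ∀ p < 0, GN p = ⊥)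
    (fM : ∀ p, FiniteDimensional K (GM p)) (fN : ∀ p, FiniteDimensional K (GN p))
    (i : ℕ) (j : ℤ) (hij : j < i + 1) : torStrandDim K n N M GM GN (i + 1) j = 0 := by
  have hfin := tensorGrade_finite nM (barDGrade_neg (n := n) nN (i + 1)) fM
    (barDGrade_finite nN fN (i + 1)) j
  rw [torStrandDim, Nat.sub_eq_zero_iff_le]
  have hle : LinearMap.ker (barB K n N M i) ⊓ tensorGrade K GM (barDGrade K n N GN (i + 1)) j ≤
      LinearMap.range (barB K n N M (i + 1)) ⊓
        tensorGrade K GM (barDGrade K n N GN (i + 1)) j := by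
    rintro z ⟨hz, hz'⟩
    refine ⟨?_, hz'⟩
    have h1 : tensorGrade K GM (barDGrade K n N GN (i + 1)) j ≤
        LinearMap.eqLocus (TensorProduct.map LinearMap.id (pD (i + 1))) LinearMap.id := by
      refine tensorGrade_le fun p q hpq m hm x hx => ?_
      by_cases hp : p < 0
      · rw [nM p hp, Submodule.mem_bot] at hm; simp [hm]
      have : pD (i + 1) x = x := pD_eq nN (i + 1) q (by push_cast; omega) hx
      rw [LinearMap.mem_eqLocus, TensorProduct.map_tmul, this]
      rfl
    have h2 : TensorProduct.map LinearMap.id (pD (i + 1)) z = z := h1 hz'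
    have h3 := LinearMap.congr_fun (barB_homotopy (K := K) (n := n) (N := N) (M := M) i) z
    rw [h2, LinearMap.add_apply, LinearMap.comp_apply, LinearMap.comp_apply,
      LinearMap.mem_ker.mp hz, map_zero, add_zero] at h3
    exact ⟨_, h3⟩
  have : FiniteDimensional K ↥(LinearMap.range (barB K n N M (i + 1)) ⊓
        tensorGrade K GM (barDGrade K n N GN (i + 1)) j) :=
    Submodule.finiteDimensional_of_le inf_le_right
  exact Submodule.finrank_mono hle

end AuxThree

section AuxFour

variable {K n}

/-- The degree `p` part of an ideal, inside `S`. -/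
def gr (J : Ideal (PS K n)) (p : ℤ) : Submodule K (PS K n) :=
  polyGrade K n p ⊓ J.restrictScalars K

theorem mem_gr {J : Ideal (PS K n)} {p : ℤ} {x : PS K n} :
    x ∈ gr J p ↔ x ∈ polyGrade K n p ∧ x ∈ J := Iff.rfl

theorem gr_neg (J : Ideal (PS K n)) : ∀ p < 0, gr J p = ⊥ := fun p hp => by
  rw [gr, polyGrade_neg hp, bot_inf_eq]

theorem gr_finite (J : Ideal (PS K n)) (p : ℤ) : FiniteDimensional K (gr J p) := by
  have := polyGrade_finite (K := K) (n := n) p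
  exact Submodule.finiteDimensional_of_le (inf_le_left : gr J p ≤ polyGrade K n p)

theorem exists_glue (f : ℤ → (PS K n →ₗ[K] PS K n)) :
    ∃ F : PS K n →ₗ[K] PS K n, ∀ p, ∀ x ∈ polyGrade K n p, F x = f p x := by
  refine ⟨(basisMonomials (Fin n) K).constr K (fun m => f (m.degree : ℤ) (monomial m 1)), ?_⟩
  intro p x hx
  by_cases hp : p < 0
  · rw [polyGrade_neg hp, Submodule.mem_bot] at hx; simp [hx]
  obtain ⟨a, rfl⟩ := Int.eq_ofNat_of_zero_le (not_lt.mp hp)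
  rw [polyGrade_nat] at hx
  rw [as_sum x, map_sum, map_sum]
  refine Finset.sum_congr rfl fun m hm => ?_
  have hdeg : m.degree = a := by
    by_contra h
    exact (mem_support_iff.mp hm) (IsHomogeneous.coeff_eq_zero hx h)
  have h1 : monomial m (coeff m x) = coeff m x • (monomial m (1 : K)) := by
    rw [smul_monomial, smul_eq_mul, mul_one]
  have h2 : (basisMonomials (Fin n) K).constr K (fun m => f (m.degree : ℤ) (monomial m 1))
      (monomial m (1 : K)) = f (m.degree : ℤ) (monomial m 1) := by
    have := (basisMonomials (Fin n) K).constr_basis K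
      (fun m => f (m.degree : ℤ) (monomial m 1)) m
    rwa [coe_basisMonomials] at this
  rw [h1, map_smul, map_smul, h2, hdeg]

theorem mem_of_comp {U : Submodule K (PS K n)} {x : PS K n}
    (h : ∀ d, homogeneousComponent d x ∈ U) : x ∈ U := by
  rw [← sum_homogeneousComponent x]
  exact Submodule.sum_mem _ fun d _ => h d

theorem comp_mem_gr {J : Ideal (PS K n)} (hJ : IsHomog K n J) {x : PS K n} (hx : x ∈ J) (d : ℕ) :
    homogeneousComponent d x ∈ gr J d := by
  refine ⟨?_, hJ x hx d⟩
  rw [polyGrade_nat]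
  exact homogeneousComponent_isHomogeneous d x

theorem exists_proj {J : Ideal (PS K n)} (hJ : IsHomog K n J) :
    ∃ F : PS K n →ₗ[K] PS K n, (∀ p, ∀ x ∈ polyGrade K n p, F x ∈ gr J p) ∧
      ∀ x ∈ J, F x = x := by
  have h : ∀ p, ∃ g : PS K n →ₗ[K] gr J p, g.comp (gr J p).subtype = LinearMap.id := fun p =>
    LinearMap.exists_leftInverse_of_injective _ (by simp)
  choose g hg using h
  obtain ⟨F, hF⟩ := exists_glue (fun p => (gr J p).subtype.comp (g p))
  refine ⟨F, fun p x hx => ?_, fun x hx => ?_⟩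
  · rw [hF p x hx]; exact (g p x).2
  · suffices h : x ∈ LinearMap.eqLocus F LinearMap.id from h
    refine mem_of_comp fun d => ?_
    have h1 := comp_mem_gr hJ hx d
    rw [LinearMap.mem_eqLocus, hF d _ h1.1]
    have h2 := LinearMap.congr_fun (hg d) ⟨_, h1⟩
    simp only [LinearMap.comp_apply, Submodule.subtype_apply, LinearMap.id_apply] at h2 ⊢
    rw [h2]

theorem exists_trans {I I' : Ideal (PS K n)}
    (h : ∀ p, Module.finrank K (gr I p) = Module.finrank K (gr I' p)) :
    ∃ F : PS K n →ₗ[K] PS K n, ∀ p, (gr I p).map F = gr I' p := by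
  have hl : ∀ p, ∃ g : PS K n →ₗ[K] gr I p, g.comp (gr I p).subtype = LinearMap.id := fun p =>
    LinearMap.exists_leftInverse_of_injective _ (by simp)
  choose g hg using hl
  have he : ∀ p, Nonempty (gr I p ≃ₗ[K] gr I' p) := fun p => by
    have := gr_finite I p
    have := gr_finite I' p
    exact ⟨LinearEquiv.ofFinrankEq _ _ (h p)⟩
  let e := fun p => Classical.choice (he p)
  obtain ⟨F, hF⟩ := exists_glue (fun p => (gr I' p).subtype.comp ((e p).toLinearMap.comp (g p)))
  have key : ∀ p (x : gr I p), F x = e p x := fun p x => by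
    rw [hF p x x.2.1]
    have h2 := LinearMap.congr_fun (hg p) x
    simp only [LinearMap.comp_apply, Submodule.subtype_apply, LinearMap.id_apply] at h2 ⊢
    rw [h2]; rfl
  refine ⟨F, fun p => le_antisymm ?_ ?_⟩
  · rintro _ ⟨x, hx, rfl⟩
    rw [key p ⟨x, hx⟩]; exact (e p _).2
  · intro y hy
    refine ⟨(e p).symm ⟨y, hy⟩, Subtype.property _, ?_⟩
    rw [key]; simp

/-- The strand of `I ⊗ S^i ⊗ S`. -/
def Xs (I : Ideal (PS K n)) (j : ℤ) (i : ℕ) :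
    Submodule K (PS K n ⊗[K] barD K n (PS K n) i) :=
  tensorGrade K (gr I) (barDGrade K n (PS K n) (polyGrade K n) i) j

/-- The strand of `I ⊗ S^i ⊗ J`. -/
def Ys (I J : Ideal (PS K n)) (j : ℤ) (i : ℕ) :
    Submodule K (PS K n ⊗[K] barD K n (PS K n) i) :=
  tensorGrade K (gr I) (barDGrade K n (PS K n) (gr J) i) j

/-- Boundaries plus the strand of `I ⊗ S^i ⊗ J`. -/
def Ws (I J : Ideal (PS K n)) (j : ℤ) (i : ℕ) :
    Submodule K (PS K n ⊗[K] barD K n (PS K n) i) :=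
  (Xs I j (i + 1)).map (barB K n (PS K n) (PS K n) i) ⊔ Ys I J j i

theorem Xs_finite (I : Ideal (PS K n)) (j : ℤ) (i : ℕ) : FiniteDimensional K (Xs I j i) :=
  tensorGrade_finite (gr_neg I) (barDGrade_neg (fun _ hp => polyGrade_neg hp) i) (gr_finite I)
    (barDGrade_finite (fun _ hp => polyGrade_neg hp) polyGrade_finite i) j

theorem Ys_finite (I J : Ideal (PS K n)) (j : ℤ) (i : ℕ) : FiniteDimensional K (Ys I J j i) :=
  tensorGrade_finite (gr_neg I) (barDGrade_neg (gr_neg J) i) (gr_finite I)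
    (barDGrade_finite (gr_neg J) (gr_finite J) i) j

theorem Ws_finite (I J : Ideal (PS K n)) (j : ℤ) (i : ℕ) : FiniteDimensional K (Ws I J j i) := by
  have := Xs_finite I j (i + 1)
  have := Ys_finite I J j i
  unfold Ws
  infer_instance

theorem polyGrade_eq_gr_top : polyGrade K n = gr (⊤ : Ideal (PS K n)) := by
  ext p x; simp [mem_gr]

theorem Xs_eq (I : Ideal (PS K n)) (j : ℤ) (i : ℕ) : Xs I j i = Ys I ⊤ j i := by
  rw [Xs, Ys, polyGrade_eq_gr_top]

theorem Ys_finrank_le {I I' J J' : Ideal (PS K n)}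
    (hI : ∀ p, Module.finrank K (gr I p) = Module.finrank K (gr I' p))
    (hJ : ∀ p, Module.finrank K (gr J p) = Module.finrank K (gr J' p)) (j : ℤ) (i : ℕ) :
    Module.finrank K (Ys I' J' j i) ≤ Module.finrank K (Ys I J j i) := by
  obtain ⟨F, hF⟩ := exists_trans hI
  obtain ⟨F', hF'⟩ := exists_trans hJ
  have : Ys I' J' j i =
      (Ys I J j i).map (TensorProduct.map F (Dmap LinearMap.id F' i)) := by
    rw [Ys, Ys, tensorGrade_map]
    simp only [hF]
    congr 1
    ext1 p
    rw [barDGrade_map _ _ (by simp)]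
    simp only [hF']
  rw [this]
  have := Ys_finite I J j i
  exact Submodule.finrank_map_le _ _

theorem Ys_finrank_eq {I I' J J' : Ideal (PS K n)}
    (hI : ∀ p, Module.finrank K (gr I p) = Module.finrank K (gr I' p))
    (hJ : ∀ p, Module.finrank K (gr J p) = Module.finrank K (gr J' p)) (j : ℤ) (i : ℕ) :
    Module.finrank K (Ys I J j i) = Module.finrank K (Ys I' J' j i) :=
  le_antisymm (Ys_finrank_le (fun p => (hI p).symm) (fun p => (hJ p).symm) j i)
    (Ys_finrank_le hI hJ j i)

/-! Gradings on `I` and `S/J`. -/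

theorem idealGrade_map (I : Ideal (PS K n)) (p : ℤ) :
    (idealGrade K n I p).map ((Submodule.subtype I).restrictScalars K) = gr I p := by
  ext x
  constructor
  · rintro ⟨y, hy, rfl⟩
    exact ⟨hy, y.2⟩
  · rintro ⟨h1, h2⟩
    exact ⟨⟨x, h2⟩, h1, rfl⟩

theorem idealGrade_act (I : Ideal (PS K n)) : GradedAct (n := n) (idealGrade K n I) :=
  fun _ _ _ hs _ hx => polyGrade_mul hs hx

theorem quotGrade_act (J : Ideal (PS K n)) : GradedAct (n := n) (quotGrade K n J) := by
  rintro p q s hs _ ⟨x, hx, rfl⟩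
  exact ⟨s * x, polyGrade_mul hs hx, rfl⟩

theorem idealGrade_neg (I : Ideal (PS K n)) : ∀ p < 0, idealGrade K n I p = ⊥ := fun p hp => by
  rw [eq_bot_iff]
  intro x hx
  have hx' : (x : PS K n) ∈ polyGrade K n p := hx
  rw [polyGrade_neg hp, Submodule.mem_bot] at hx'
  rw [Submodule.mem_bot]
  exact Subtype.ext hx'

theorem quotGrade_neg (J : Ideal (PS K n)) : ∀ p < 0, quotGrade K n J p = ⊥ := fun p hp => by
  rw [quotGrade, polyGrade_neg hp, Submodule.map_bot]

theorem idealGrade_finite (I : Ideal (PS K n)) (p : ℤ) :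
    FiniteDimensional K (idealGrade K n I p) := by
  have h := gr_finite I p
  rw [← idealGrade_map] at h
  exact LinearEquiv.finiteDimensional (Submodule.equivMapOfInjective
    ((Submodule.subtype I).restrictScalars K) Subtype.val_injective (idealGrade K n I p)).symm

theorem quotGrade_finite (J : Ideal (PS K n)) (p : ℤ) :
    FiniteDimensional K (quotGrade K n J p) := by
  have := polyGrade_finite (K := K) (n := n) p
  unfold quotGrade
  infer_instance

theorem idealGrade_proj {I : Ideal (PS K n)} (hI : IsHomog K n I) :
    HasProj (idealGrade K n I) := by
  refine ⟨idealGrade_neg I, ?_, fun p => ?_⟩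
  · rw [eq_top_iff]
    intro x _
    have : x = ∑ d ∈ Finset.range ((x : PS K n).totalDegree + 1),
        (⟨homogeneousComponent d (x : PS K n), hI x x.2 d⟩ : I) := by
      apply Subtype.ext
      rw [Submodule.coe_sum]
      exact (sum_homogeneousComponent (x : PS K n)).symm
    rw [this]
    refine Submodule.sum_mem _ fun d _ => Submodule.mem_iSup_of_mem (d : ℤ) ?_
    exact (comp_mem_gr hI x.2 d).1
  · obtain ⟨f, hf, hf0⟩ := (HasProj.poly (K := K) (n := n)).2.2 p
    by_cases hp : p < 0
    · refine ⟨0, fun x hx => ?_, fun _ _ _ _ => rfl⟩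
      rw [idealGrade_neg I p hp, Submodule.mem_bot] at hx; simp [hx]
    have hfI : ∀ x : I, f (x : PS K n) ∈ I := by
      intro x
      have h1 : (x : PS K n) ∈ (I.restrictScalars K).comap f := by
        refine mem_of_comp fun d => ?_
        have h2 := comp_mem_gr hI x.2 d
        rw [Submodule.mem_comap]
        by_cases h : (d : ℤ) = p
        · rw [hf _ (h ▸ h2.1)]; exact h2.2
        · rw [hf0 _ h _ h2.1]; exact zero_mem _
      exact h1
    refine ⟨LinearMap.codRestrict (I.restrictScalars K)
      (f.comp ((Submodule.subtype I).restrictScalars K)) hfI, fun x hx => ?_, fun q hq x hx => ?_⟩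
    · exact Subtype.ext (hf _ hx)
    · exact Subtype.ext (hf0 q hq _ hx)

/-- The quotient map. -/
def qm (J : Ideal (PS K n)) : PS K n →ₗ[K] (PS K n ⧸ J) := (Ideal.Quotient.mkₐ K J).toLinearMap

theorem qm_eq_zero {J : Ideal (PS K n)} {x : PS K n} : qm J x = 0 ↔ x ∈ J :=
  Ideal.Quotient.eq_zero_iff_mem

theorem exists_section (J : Ideal (PS K n)) :
    ∃ σ : (PS K n ⧸ J) →ₗ[K] PS K n, ∀ x, σ (qm J x) - x ∈ J := by
  have hs : LinearMap.range (qm J) = ⊤ := by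
    rw [LinearMap.range_eq_top]
    exact Ideal.Quotient.mkₐ_surjective K J
  obtain ⟨σ, hσ⟩ := LinearMap.exists_rightInverse_of_surjective _ hs
  refine ⟨σ, fun x => ?_⟩
  rw [← qm_eq_zero, map_sub, sub_eq_zero]
  exact LinearMap.congr_fun hσ (qm J x)

theorem quotGrade_proj {J : Ideal (PS K n)} (hJ : IsHomog K n J) :
    HasProj (quotGrade K n J) := by
  refine ⟨quotGrade_neg J, ?_, fun p => ?_⟩
  · have h1 := (HasProj.poly (K := K) (n := n)).2.1
    have h2 : ⨆ p, quotGrade K n J p = (⨆ p, polyGrade K n p).map (qm J) := by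
      rw [Submodule.map_iSup]; rfl
    rw [h2, h1, Submodule.map_top, LinearMap.range_eq_top]
    exact Ideal.Quotient.mkₐ_surjective K J
  · obtain ⟨f, hf, hf0⟩ := (HasProj.poly (K := K) (n := n)).2.2 p
    have hfJ : ∀ x ∈ J, f x ∈ J := by
      intro x hx
      have h1 : x ∈ (J.restrictScalars K).comap f := by
        refine mem_of_comp fun d => ?_
        have h2 := comp_mem_gr hJ hx d
        rw [Submodule.mem_comap]
        by_cases h : (d : ℤ) = p
        · rw [hf _ (h ▸ h2.1)]; exact h2.2
        · rw [hf0 _ h _ h2.1]; exact zero_mem _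
      exact h1
    obtain ⟨σ, hσ⟩ := exists_section J
    have key : ∀ x, qm J (f (σ (qm J x))) = qm J (f x) := fun x => by
      rw [← sub_eq_zero, ← map_sub, ← map_sub, qm_eq_zero]
      exact hfJ _ (hσ x)
    refine ⟨(qm J).comp (f.comp σ), ?_, ?_⟩
    · rintro _ ⟨x, hx, rfl⟩
      exact (key x).trans (by rw [hf x hx]; rfl)
    · rintro q hq _ ⟨x, hx, rfl⟩
      exact (key x).trans (by rw [hf0 q hq x hx, map_zero])

/-! Reduction to subspaces of `S ⊗ S^i ⊗ S`. -/

/-- A graded module `M` embedded in `S` with image `I`. -/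
structure Emb {M : Type} [AddCommGroup M] [Module K M] [Module (PS K n) M]
    (I : Ideal (PS K n)) (GM : ℤ → Submodule K M) (α : M →ₗ[K] PS K n) : Prop where
  inj : Function.Injective α
  lin : ∀ (s : PS K n) (x : M), α (s • x) = s • α x
  map : ∀ p, (GM p).map α = gr I p
  act : GradedAct (n := n) GM
  neg : ∀ p < 0, GM p = ⊥
  fin : ∀ p, FiniteDimensional K (GM p)

section EmbSec

variable {M : Type} [AddCommGroup M] [Module K M] [Module (PS K n) M]
  [IsScalarTower K (PS K n) M]

/-- The inclusion of strands. -/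
def iot (α : M →ₗ[K] PS K n) (i : ℕ) :
    M ⊗[K] barD K n (PS K n) i →ₗ[K] PS K n ⊗[K] barD K n (PS K n) i :=
  TensorProduct.map α
    (Dmap (AlgHom.id K (PS K n)).toLinearMap LinearMap.id i)

/-- The projection of strands. -/
def prj (J : Ideal (PS K n)) (i : ℕ) :
    M ⊗[K] barD K n (PS K n) i →ₗ[K] M ⊗[K] barD K n (PS K n ⧸ J) i :=
  TensorProduct.map LinearMap.id (Dmap (AlgHom.id K (PS K n)).toLinearMap (qm J) i)

theorem alg_id : (AlgHom.id K (PS K n)).toLinearMap = LinearMap.id := rfl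

theorem iot_inj {I : Ideal (PS K n)} {GM : ℤ → Submodule K M} {α : M →ₗ[K] PS K n} (hE : Emb I GM α)
    (i : ℕ) : Function.Injective (iot α i) := by
  unfold iot
  rw [alg_id, Dmap_id]
  exact Module.Flat.rTensor_preserves_injective_linearMap
    α hE.inj

theorem iot_barB {I : Ideal (PS K n)} {GM : ℤ → Submodule K M} {α : M →ₗ[K] PS K n} (hE : Emb I GM α)
    (i : ℕ) :
    (iot α i).comp (barB K n (PS K n) M i) = (barB K n (PS K n) (PS K n) i).comp (iot α (i + 1)) :=
  barB_nat (AlgHom.id K (PS K n)) α LinearMap.id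
    hE.lin (fun _ _ => rfl) i

theorem prj_barB (J : Ideal (PS K n)) (i : ℕ) :
    (prj (M := M) J i).comp (barB K n (PS K n) M i) =
      (barB K n (PS K n ⧸ J) M i).comp (prj (M := M) J (i + 1)) :=
  barB_nat (AlgHom.id K (PS K n)) LinearMap.id (qm J)
    (fun _ _ => rfl) (fun _ _ => rfl) i

theorem iot_map {I : Ideal (PS K n)} {GM : ℤ → Submodule K M} {α : M →ₗ[K] PS K n} (hE : Emb I GM α)
    (GN : ℤ → Submodule K (PS K n)) (j : ℤ) (i : ℕ) :
    (tensorGrade K (GM) (barDGrade K n (PS K n) GN i) j).map (iot α i) =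
      tensorGrade K (gr I) (barDGrade K n (PS K n) GN i) j := by
  unfold iot
  rw [tensorGrade_map, alg_id, Dmap_id]
  simp only [hE.map, Submodule.map_id]

theorem prj_map (GM : ℤ → Submodule K M) (J : Ideal (PS K n)) (GN : ℤ → Submodule K (PS K n)) (j : ℤ) (i : ℕ) :
    (tensorGrade K (GM) (barDGrade K n (PS K n) GN i) j).map (prj (M := M) J i) =
      tensorGrade K (GM) (barDGrade K n (PS K n ⧸ J)
        (fun p => (GN p).map (qm J)) i) j := by
  unfold prj
  rw [tensorGrade_map, alg_id]
  simp only [Submodule.map_id]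
  congr 1
  ext1 p
  rw [barDGrade_map _ _ (by simp)]

theorem ker_prj (GM : ℤ → Submodule K M) {J : Ideal (PS K n)} (hJ : IsHomog K n J) (j : ℤ) (i : ℕ) :
    LinearMap.ker (prj (M := M) J i) ⊓
      tensorGrade K (GM) (barDGrade K n (PS K n) (polyGrade K n) i) j =
      tensorGrade K (GM) (barDGrade K n (PS K n) (gr J) i) j := by
  apply le_antisymm
  · rintro x ⟨hx, hx'⟩
    obtain ⟨F, hF, hFJ⟩ := exists_proj hJ
    obtain ⟨σ, hσ⟩ := exists_section J
    have he : LinearMap.id = F + ((LinearMap.id - F).comp σ).comp (qm J) := by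
      refine LinearMap.ext fun y => ?_
      have h1 := hFJ _ (hσ y)
      rw [map_sub] at h1
      simp only [LinearMap.add_apply, LinearMap.comp_apply, LinearMap.sub_apply, LinearMap.id_apply]
      have h2 : σ (qm J y) - F (σ (qm J y)) = y - F y := by
        rw [sub_eq_sub_iff_sub_eq_sub, ← h1]
      rw [h2]; abel
    have h3 : Dmap LinearMap.id F i +
        (Dmap LinearMap.id ((LinearMap.id - F).comp σ) i).comp (Dmap LinearMap.id (qm J) i) =
        (LinearMap.id : barD K n (PS K n) i →ₗ[K] _) := by
      rw [Dmap_comp, LinearMap.id_comp, ← Dmap_add, ← he, Dmap_id]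
    have h4 : TensorProduct.map (LinearMap.id : M →ₗ[K] M) (Dmap LinearMap.id F i) x = x := by
      have h5 : TensorProduct.map (LinearMap.id : M →ₗ[K] M) (Dmap LinearMap.id F i) +
          (TensorProduct.map (LinearMap.id : M →ₗ[K] M)
            (Dmap LinearMap.id ((LinearMap.id - F).comp σ) i)).comp (prj (M := M) J i) =
          LinearMap.id := by
        unfold prj
        rw [alg_id, ← TensorProduct.map_comp, LinearMap.id_comp, ← TensorProduct.map_add_right, h3,
          TensorProduct.map_id]
      have h6 := LinearMap.congr_fun h5 x
      rw [LinearMap.add_apply, LinearMap.comp_apply, LinearMap.mem_ker.mp hx, map_zero,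
        add_zero] at h6
      exact h6
    rw [← h4]
    have h7 := Submodule.mem_map_of_mem
      (f := TensorProduct.map (LinearMap.id : M →ₗ[K] M) (Dmap LinearMap.id F i)) hx'
    rw [tensorGrade_map] at h7
    refine tensorGrade_mono (fun p => ?_) (fun p => ?_) h7
    · rw [Submodule.map_id]
    · rw [barDGrade_map _ _ (by simp)]
      refine barDGrade_mono (fun q => ?_) i p
      rintro _ ⟨y, hy, rfl⟩
      exact hF q y hy
  · refine le_inf ?_ (tensorGrade_mono (fun _ => le_rfl) (barDGrade_mono (fun _ => inf_le_left) i))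
    rw [LinearMap.le_ker_iff_map, prj_map]
    rw [eq_bot_iff]
    have hz : (fun p => (gr J p).map (qm J)) = fun _ => ⊥ := by
      ext1 p
      rw [eq_bot_iff]
      rintro _ ⟨y, hy, rfl⟩
      exact qm_eq_zero.mpr hy.2
    rw [hz]
    have hz2 : ∀ i p, barDGrade K n (PS K n ⧸ J) (fun _ => ⊥) i p = ⊥ := by
      intro i
      induction i with
      | zero => exact fun _ => rfl
      | succ i ih =>
        intro p
        rw [eq_bot_iff]
        refine barDGrade_succ_le fun p q hpq s hs x hx => ?_
        rw [ih, Submodule.mem_bot] at hx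
        simp [hx]
    refine tensorGrade_le fun p q hpq s hs x hx => ?_
    rw [hz2, Submodule.mem_bot] at hx
    simp [hx]

theorem iot_finrank {I : Ideal (PS K n)} {GM : ℤ → Submodule K M} {α : M →ₗ[K] PS K n} (hE : Emb I GM α)
    (i : ℕ)
    (U : Submodule K (M ⊗[K] barD K n (PS K n) i)) :
    Module.finrank K (U.map (iot α i)) = Module.finrank K U :=
  (Submodule.equivMapOfInjective (iot α i) (iot_inj hE i) U).finrank_eq.symm

theorem cdim_eq {I : Ideal (PS K n)} {GM : ℤ → Submodule K M} {α : M →ₗ[K] PS K n} (hE : Emb I GM α)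
    {J : Ideal (PS K n)} (hJ : IsHomog K n J) (j : ℤ) (i : ℕ) :
    cdim (n := n) (GM) (quotGrade K n J) i j + Module.finrank K (Ys I J j i) =
      Module.finrank K (Xs I j i) := by
  have hfin : FiniteDimensional K
      (tensorGrade K (GM) (barDGrade K n (PS K n) (polyGrade K n) i) j) :=
    tensorGrade_finite hE.neg (barDGrade_neg (fun _ hp => polyGrade_neg hp) i)
      hE.fin
      (barDGrade_finite (fun _ hp => polyGrade_neg hp) polyGrade_finite i) j
  have h := finrank_ker_inf (prj (M := M) J i)
    (tensorGrade K (GM) (barDGrade K n (PS K n) (polyGrade K n) i) j)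
  rw [ker_prj GM hJ, prj_map, ← iot_finrank hE i, iot_map hE, ← iot_finrank hE i, iot_map hE, add_comm] at h
  exact h

theorem rdim_eq {I : Ideal (PS K n)} {GM : ℤ → Submodule K M} {α : M →ₗ[K] PS K n} (hE : Emb I GM α)
    {J : Ideal (PS K n)} (hJ : IsHomog K n J) (j : ℤ) (i : ℕ) :
    rdim (n := n) (GM) (quotGrade K n J) i j + Module.finrank K (Ys I J j i) =
      Module.finrank K (Ws I J j i) := by
  set Z := tensorGrade K (GM) (barDGrade K n (PS K n) (polyGrade K n) i) j with hZ
  set Z1 := tensorGrade K (GM) (barDGrade K n (PS K n) (polyGrade K n) (i + 1)) j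
    with hZ1
  set Y := tensorGrade K (GM) (barDGrade K n (PS K n) (gr J) i) j with hY
  have hfin : FiniteDimensional K Z :=
    tensorGrade_finite hE.neg (barDGrade_neg (fun _ hp => polyGrade_neg hp) i)
      hE.fin
      (barDGrade_finite (fun _ hp => polyGrade_neg hp) polyGrade_finite i) j
  have hker : LinearMap.ker (prj (M := M) J i) ⊓ Z = Y := ker_prj GM hJ j i
  have hYk : Y ≤ LinearMap.ker (prj (M := M) J i) := hker ▸ inf_le_left
  have hYZ : Y ≤ Z := hker ▸ inf_le_right
  set U := Z1.map (barB K n (PS K n) M i) with hU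
  have hUZ : U ≤ Z := by
    rw [hU, Submodule.map_le_iff_le_comap]
    exact barB_graded hE.act (fun _ _ _ hs _ hx => polyGrade_mul hs hx) i j
  have hUY : U ⊔ Y ≤ Z := sup_le hUZ hYZ
  have hfin2 : FiniteDimensional K ↥(U ⊔ Y) := Submodule.finiteDimensional_of_le hUY
  have h := finrank_ker_inf (prj (M := M) J i) (U ⊔ Y)
  have h1 : LinearMap.ker (prj (M := M) J i) ⊓ (U ⊔ Y) = Y :=
    le_antisymm ((inf_le_inf_left _ hUY).trans hker.le) (le_inf hYk le_sup_right)
  have h2 : (U ⊔ Y).map (prj (M := M) J i) = U.map (prj (M := M) J i) := by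
    rw [Submodule.map_sup, LinearMap.le_ker_iff_map.mp hYk, sup_bot_eq]
  have h3 : U.map (prj (M := M) J i) = (tensorGrade K (GM)
      (barDGrade K n (PS K n ⧸ J) (quotGrade K n J) (i + 1)) j).map
        (barB K n (PS K n ⧸ J) M i) := by
    rw [hU, ← Submodule.map_comp, prj_barB, Submodule.map_comp, hZ1, prj_map]
    rfl
  have h4 : (U ⊔ Y).map (iot α i) = Ws I J j i := by
    rw [Submodule.map_sup, hU, ← Submodule.map_comp, iot_barB hE, Submodule.map_comp, hZ1, iot_map hE,
      hY, iot_map hE]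
    rfl
  have h5 : Y.map (iot α i) = Ys I J j i := by
    rw [hY, iot_map hE]; rfl
  rw [h1, h2, h3, ← iot_finrank hE i Y, ← iot_finrank hE i (U ⊔ Y), h4, h5, add_comm] at h
  exact h

end EmbSec

theorem emb_ideal (I : Ideal (PS K n)) :
    Emb I (idealGrade K n I) ((Submodule.subtype I).restrictScalars K) :=
  ⟨Subtype.val_injective, fun _ _ => rfl, idealGrade_map I, idealGrade_act I, idealGrade_neg I,
    idealGrade_finite I⟩

/-- The comparison: ranks control Tor. -/
theorem torIQ_le {I J I' J' : Ideal (PS K n)} (hI : IsHomog K n I) (hJ : IsHomog K n J)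
    (hI' : IsHomog K n I') (hJ' : IsHomog K n J')
    (dI : ∀ p, Module.finrank K (gr I p) = Module.finrank K (gr I' p))
    (dJ : ∀ p, Module.finrank K (gr J p) = Module.finrank K (gr J' p)) (j : ℤ)
    (hW : ∀ i : ℕ, i < j.toNat + 1 →
      Module.finrank K (Ws I' J' j i) ≤ Module.finrank K (Ws I J j i)) (i : ℕ) :
    torIQ K n I J i j ≤ torIQ K n I' J' i j := by
  have y : ∀ i, Module.finrank K (Ys I J j i) = Module.finrank K (Ys I' J' j i) :=
    Ys_finrank_eq dI dJ j
  have x : ∀ i, Module.finrank K (Xs I j i) = Module.finrank K (Xs I' j i) := by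
    intro i
    rw [Xs_eq, Xs_eq]
    exact Ys_finrank_eq dI (fun _ => rfl) j i
  unfold torIQ
  cases i with
  | zero =>
    rw [tor_zero_eq (idealGrade_act I) (quotGrade_act J) (idealGrade_proj hI) (quotGrade_proj hJ),
      tor_zero_eq (idealGrade_act I') (quotGrade_act J') (idealGrade_proj hI') (quotGrade_proj hJ')]
    have h1 := cdim_eq (emb_ideal I) hJ j 0
    have h2 := cdim_eq (emb_ideal I') hJ' j 0
    have h3 := rdim_eq (emb_ideal I) hJ j 0
    have h4 := rdim_eq (emb_ideal I') hJ' j 0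
    have h5 := hW 0 (by omega)
    have h6 := x 0
    have h7 := y 0
    omega
  | succ i =>
    by_cases hij : j < i + 1
    · rw [tor_vanish (idealGrade_neg I) (quotGrade_neg J) (idealGrade_finite I)
        (quotGrade_finite J) i j hij]
      exact Nat.zero_le _
    rw [tor_succ_eq (idealGrade_act I) (quotGrade_act J) (idealGrade_proj hI) (quotGrade_proj hJ)
        (idealGrade_finite I) (quotGrade_finite J),
      tor_succ_eq (idealGrade_act I') (quotGrade_act J') (idealGrade_proj hI') (quotGrade_proj hJ')
        (idealGrade_finite I') (quotGrade_finite J')]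
    have h1 := cdim_eq (emb_ideal I) hJ j (i + 1)
    have h2 := cdim_eq (emb_ideal I') hJ' j (i + 1)
    have h3 := rdim_eq (emb_ideal I) hJ j (i + 1)
    have h4 := rdim_eq (emb_ideal I') hJ' j (i + 1)
    have h3' := rdim_eq (emb_ideal I) hJ j i
    have h4' := rdim_eq (emb_ideal I') hJ' j i
    have h5 := hW (i + 1) (by omega)
    have h5' := hW i (by omega)
    have h6 := x (i + 1)
    have h7 := y (i + 1)
    have h7' := y i
    omega

end AuxFour

section AuxFive

variable {K n}

theorem exists_eval_ne {σ : Type} [Infinite K] {F : MvPolynomial σ K} (hF : F ≠ 0) :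
    ∃ a, eval a F ≠ 0 := by
  by_contra h
  push Not at h
  exact hF (MvPolynomial.funext fun a => by simp [h a])

theorem tensorGrade_Lim_le' {A B : Type} [AddCommGroup A] [Module K A] [AddCommGroup B]
    [Module K B] {σ : Type} {G : Set (σ → K)} {a0 : σ → K}
    {GA : (σ → K) → ℤ → Submodule K A} {GB : (σ → K) → ℤ → Submodule K B}
    {GA0 : ℤ → Submodule K A} {GB0 : ℤ → Submodule K B}
    (nA : ∀ p < 0, GA0 p = ⊥) (nB : ∀ p < 0, GB0 p = ⊥) (d : ℤ)
    (hA : ∀ p ≤ d, GA0 p ≤ Lim G a0 (fun a => GA a p))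
    (hB : ∀ p ≤ d, GB0 p ≤ Lim G a0 (fun a => GB a p)) :
    tensorGrade K GA0 GB0 d ≤ Lim G a0 (fun a => tensorGrade K (GA a) (GB a) d) := by
  refine tensorGrade_le fun p q h x hx y hy => ?_
  by_cases hp : p < 0
  · rw [nA p hp, Submodule.mem_bot] at hx
    rw [hx, TensorProduct.zero_tmul]; exact zero_mem _
  by_cases hq : q < 0
  · rw [nB q hq, Submodule.mem_bot] at hy
    rw [hy, TensorProduct.tmul_zero]; exact zero_mem _
  obtain ⟨v, hv, rfl, hv'⟩ := hA p (by omega) hx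
  obtain ⟨w, hw, rfl, hw'⟩ := hB q (by omega) hy
  exact ⟨_, IsPF.bilin (TensorProduct.mk K A B) hv hw, rfl,
    fun a ha => tmul_mem_tensorGrade h (hv' a ha) (hw' a ha)⟩

theorem barDGrade_Lim_le' {σ : Type} {G : Set (σ → K)} {a0 : σ → K}
    {GN : (σ → K) → ℤ → Submodule K (PS K n)} {GN0 : ℤ → Submodule K (PS K n)}
    (nN : ∀ p < 0, GN0 p = ⊥) (D : ℤ)
    (h : ∀ p ≤ D, GN0 p ≤ Lim G a0 (fun a => GN a p)) (i : ℕ) :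
    ∀ d ≤ D, barDGrade K n (PS K n) GN0 i d ≤
      Lim G a0 (fun a => barDGrade K n (PS K n) (GN a) i d) := by
  induction i with
  | zero => exact h
  | succ i ih =>
    intro d hd
    exact tensorGrade_Lim_le' (fun _ hp => polyGrade_neg hp) (barDGrade_neg nN i) d
      (fun p _ => le_Lim_const _ _ _) (fun p hp => ih p (hp.trans hd))

theorem Ws_Lim_le {σ : Type} {G : Set (σ → K)} {a0 : σ → K}
    {I J : (σ → K) → Ideal (PS K n)} {I0 J0 : Ideal (PS K n)} (j : ℤ)
    (hI : ∀ p ≤ j, gr I0 p ≤ Lim G a0 (fun a => gr (I a) p))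
    (hJ : ∀ p ≤ j, gr J0 p ≤ Lim G a0 (fun a => gr (J a) p)) (i : ℕ) :
    Ws I0 J0 j i ≤ Lim G a0 (fun a => Ws (I a) (J a) j i) := by
  have hp : ∀ p < 0, polyGrade K n p = ⊥ := fun _ hp => polyGrade_neg hp
  refine sup_Lim_le (map_Lim_le ?_ _) ?_
  · exact tensorGrade_Lim_le' (gr_neg I0) (barDGrade_neg hp (i + 1)) j hI
      (fun p _ => le_Lim_const _ _ _)
  · exact tensorGrade_Lim_le' (gr_neg I0) (barDGrade_neg (gr_neg J0) i) j hI
      (barDGrade_Lim_le' (gr_neg J0) j hJ i)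

/-! Changes of coordinates. -/

/-- Change of coordinates for any matrix. -/
def cc (A : Matrix (Fin n) (Fin n) K) : PS K n →ₐ[K] PS K n :=
  MvPolynomial.aeval (fun i => ∑ j, A j i • MvPolynomial.X j)

theorem coordChange_eq (g : GL (Fin n) K) : coordChange K n g = cc (g : Matrix (Fin n) (Fin n) K) :=
  rfl

theorem cc_mul (A B : Matrix (Fin n) (Fin n) K) : cc (A * B) = (cc A).comp (cc B) := by
  refine MvPolynomial.algHom_ext fun i => ?_
  simp only [cc, AlgHom.comp_apply, aeval_X, map_sum, map_smul, Matrix.mul_apply, Finset.sum_smul,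
    Finset.smul_sum, smul_smul]
  rw [Finset.sum_comm]
  refine Finset.sum_congr rfl fun k _ => Finset.sum_congr rfl fun l _ => ?_
  rw [mul_comm]

theorem cc_one : cc (1 : Matrix (Fin n) (Fin n) K) = AlgHom.id K (PS K n) := by
  refine MvPolynomial.algHom_ext fun i => ?_
  simp [cc, Matrix.one_apply, ite_smul]

theorem cc_map_map (A B : Matrix (Fin n) (Fin n) K) (J : Ideal (PS K n)) :
    (J.map (cc B)).map (cc A) = J.map (cc (A * B)) := by
  rw [cc_mul, Ideal.map_mapₐ]

theorem cc_surj {A B : Matrix (Fin n) (Fin n) K} (h : A * B = 1) :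
    Function.Surjective (cc A) := fun x => ⟨cc B x, by
  have := congrArg (fun f => f x) (cc_mul A B)
  rw [h, cc_one] at this
  exact this.symm⟩

theorem cc_isHomogeneous (A : Matrix (Fin n) (Fin n) K) {x : PS K n} {d : ℕ}
    (hx : x.IsHomogeneous d) : (cc A x).IsHomogeneous d := by
  have h := hx.aeval (fun i => ∑ j, A j i • (X j : PS K n)) (n := 1) (fun i => by
    refine IsHomogeneous.sum _ _ _ fun j _ => ?_
    rw [smul_eq_C_mul]
    simpa using (isHomogeneous_C (Fin n) (A j i)).mul (isHomogeneous_X K j))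
  rwa [one_mul] at h

theorem cc_polyGrade (A : Matrix (Fin n) (Fin n) K) {x : PS K n} {p : ℤ}
    (hx : x ∈ polyGrade K n p) : cc A x ∈ polyGrade K n p := by
  by_cases hp : p < 0
  · rw [polyGrade_neg hp, Submodule.mem_bot] at hx; rw [hx, map_zero]; exact zero_mem _
  obtain ⟨a, rfl⟩ := Int.eq_ofNat_of_zero_le (not_lt.mp hp)
  rw [polyGrade_nat] at *
  exact cc_isHomogeneous A hx

theorem cc_gr (A : Matrix (Fin n) (Fin n) K) {J : Ideal (PS K n)} {x : PS K n} {p : ℤ}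
    (hx : x ∈ gr J p) : cc A x ∈ gr (J.map (cc A)) p :=
  ⟨cc_polyGrade A hx.1, Ideal.mem_map_of_mem _ hx.2⟩

theorem cc_polyGrade_map {A B : Matrix (Fin n) (Fin n) K} (h : A * B = 1) (p : ℤ) :
    (polyGrade K n p).map (cc A).toLinearMap = polyGrade K n p := by
  apply le_antisymm
  · rintro _ ⟨x, hx, rfl⟩
    exact cc_polyGrade A hx
  · intro x hx
    refine ⟨cc B x, cc_polyGrade B hx, ?_⟩
    have := congrArg (fun f => f x) (cc_mul A B)
    rw [h, cc_one] at this
    exact this.symm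

theorem cc_map_inv {A B : Matrix (Fin n) (Fin n) K} (h : B * A = 1) (J : Ideal (PS K n)) :
    (J.map (cc A)).map (cc B) = J := by
  rw [cc_map_map, h, cc_one]
  exact Ideal.map_id J

theorem gr_cc {A B : Matrix (Fin n) (Fin n) K} (h : A * B = 1) (J : Ideal (PS K n)) (p : ℤ) :
    gr (J.map (cc A)) p = (gr J p).map (cc A).toLinearMap := by
  apply le_antisymm
  · intro x hx
    have h' : B * A = 1 := mul_eq_one_comm.mp h
    refine ⟨cc B x, ?_, ?_⟩
    · have := cc_gr B hx
      rwa [cc_map_inv h'] at this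
    · have := congrArg (fun f => f x) (cc_mul A B)
      rw [h, cc_one] at this
      exact this.symm
  · rintro _ ⟨x, hx, rfl⟩
    exact cc_gr A hx

theorem gr_cc_finrank {A B : Matrix (Fin n) (Fin n) K} (h : A * B = 1) (J : Ideal (PS K n))
    (p : ℤ) : Module.finrank K (gr (J.map (cc A)) p) = Module.finrank K (gr J p) := by
  have h' : B * A = 1 := mul_eq_one_comm.mp h
  apply le_antisymm
  · rw [gr_cc h]
    have := gr_finite J p
    exact Submodule.finrank_map_le _ _
  · conv_lhs => rw [← cc_map_inv h' J, gr_cc h']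
    have := gr_finite (J.map (cc A)) p
    exact Submodule.finrank_map_le _ _

theorem homog_cc {A B : Matrix (Fin n) (Fin n) K} (h : A * B = 1) {J : Ideal (PS K n)}
    (hJ : IsHomog K n J) : IsHomog K n (J.map (cc A)) := by
  intro f hf d
  obtain ⟨x, hx, rfl⟩ := (Ideal.mem_map_iff_of_surjective (cc A) (cc_surj h)).mp hf
  have : homogeneousComponent d (cc A x) = cc A (homogeneousComponent d x) := by
    conv_lhs => rw [← sum_homogeneousComponent x]
    rw [map_sum, map_sum]
    rw [Finset.sum_congr rfl (fun e _ => homogeneousComponent_of_mem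
      (cc_isHomogeneous A (homogeneousComponent_isHomogeneous e x)))]
    rw [Finset.sum_ite_eq]
    split_ifs with hd
    · rfl
    · rw [homogeneousComponent_eq_zero _ _ (by simpa using hd), map_zero]
  rw [this]
  exact Ideal.mem_map_of_mem _ (hJ x hx d)

theorem Ws_cc {A B : Matrix (Fin n) (Fin n) K} (h : A * B = 1) (I J : Ideal (PS K n)) (j : ℤ)
    (i : ℕ) : Module.finrank K (Ws (I.map (cc A)) (J.map (cc A)) j i) ≤
      Module.finrank K (Ws I J j i) := by
  have e : Ws (I.map (cc A)) (J.map (cc A)) j i = (Ws I J j i).map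
      (TensorProduct.map (cc A).toLinearMap (Dmap (cc A).toLinearMap (cc A).toLinearMap i)) := by
    have hn := barB_nat (cc A) (cc A).toLinearMap (cc A).toLinearMap
      (fun s x => map_mul (cc A) s x) (fun s x => map_mul (cc A) s x) i
    unfold Ws
    rw [Submodule.map_sup, ← Submodule.map_comp, hn, Submodule.map_comp]
    unfold Xs Ys
    rw [tensorGrade_map, tensorGrade_map]
    rw [funext (gr_cc h I), funext (gr_cc h J)]
    simp only [barDGrade_map _ _ (cc_polyGrade_map h), cc_polyGrade_map h]
  rw [e]
  have := Ws_finite I J j i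
  exact Submodule.finrank_map_le _ _

/-! Families of changes of coordinates. -/

theorem isPF_aeval {σ : Type} {v : Fin n → (σ → K) → PS K n} (hv : ∀ i, IsPF (v i))
    (x : PS K n) : IsPF (fun a => aeval (fun i => v i a) x) := by
  induction x using MvPolynomial.induction_on with
  | C c => simpa using IsPF.const (σ := σ) (algebraMap K (PS K n) c)
  | add p q hp hq => simpa using hp.add hq
  | mul_X p i hp => simpa using hp.bilin (LinearMap.mul K (PS K n)) (hv i)

theorem isPF_cc (x : PS K n) :
    IsPF (fun a : Fin n × Fin n → K => cc (Matrix.of fun i j => a (i, j)) x) := by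
  refine isPF_aeval (fun i => IsPF.sum _ fun j _ => ?_) x
  simpa using IsPF.base (X (j, i) : MvPolynomial (Fin n × Fin n) K) (X j : PS K n)

theorem gr_cc_Lim {a0 : Fin n × Fin n → K} {B : Matrix (Fin n) (Fin n) K}
    (h : (Matrix.of fun i j => a0 (i, j)) * B = 1) (J : Ideal (PS K n)) (p : ℤ) :
    gr (J.map (cc (Matrix.of fun i j => a0 (i, j)))) p ≤
      Lim Set.univ a0 (fun a => gr (J.map (cc (Matrix.of fun i j => a (i, j)))) p) := by
  rw [gr_cc h]
  rintro _ ⟨x, hx, rfl⟩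
  exact ⟨_, isPF_cc x, rfl, fun a _ => cc_gr _ hx⟩

theorem prod_poly {σ : Type} {a0 : σ → K} {P : ℕ → (σ → K) → Prop} (N : ℕ)
    (h : ∀ i < N, ∃ F : MvPolynomial σ K, eval a0 F ≠ 0 ∧ ∀ a, eval a F ≠ 0 → P i a) :
    ∃ F : MvPolynomial σ K, eval a0 F ≠ 0 ∧ ∀ a, eval a F ≠ 0 → ∀ i < N, P i a := by
  induction N with
  | zero => exact ⟨1, by simp, fun _ _ _ h => absurd h (Nat.not_lt_zero _)⟩
  | succ N ih =>
    obtain ⟨F, hF0, hF⟩ := ih fun i hi => h i (by omega)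
    obtain ⟨G, hG0, hG⟩ := h N (by omega)
    refine ⟨F * G, by simp [hF0, hG0], fun a ha i hi => ?_⟩
    rw [map_mul] at ha
    rcases Nat.lt_succ_iff_lt_or_eq.mp hi with h1 | rfl
    · exact hF a (left_ne_zero_of_mul ha) i h1
    · exact hG a (right_ne_zero_of_mul ha)

theorem generic_Ws {a0 : Fin n × Fin n → K} {B : Matrix (Fin n) (Fin n) K}
    (h : (Matrix.of fun i j => a0 (i, j)) * B = 1) (I J : Ideal (PS K n)) (j : ℤ) (N : ℕ) :
    ∃ F : MvPolynomial (Fin n × Fin n) K, eval a0 F ≠ 0 ∧ ∀ a, eval a F ≠ 0 → ∀ i < N,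
      Module.finrank K (Ws I (J.map (cc (Matrix.of fun i j => a0 (i, j)))) j i) ≤
      Module.finrank K (Ws I (J.map (cc (Matrix.of fun i j => a (i, j)))) j i) := by
  refine prod_poly (P := fun i a =>
    Module.finrank K (Ws I (J.map (cc (Matrix.of fun i j => a0 (i, j)))) j i) ≤
      Module.finrank K (Ws I (J.map (cc (Matrix.of fun i j => a (i, j)))) j i)) N fun i _ => ?_
  have := Ws_finite I (J.map (cc (Matrix.of fun i j => a0 (i, j)))) j i
  obtain ⟨F, hF0, hF⟩ := finrank_Lim (fun a _ => Ws_finite _ _ _ _)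
    (Ws_Lim_le (G := Set.univ) (I := fun _ => I) j (fun p _ => le_Lim_const _ _ _)
      (fun p _ => gr_cc_Lim h J p) i)
  exact ⟨F, hF0, fun a ha => hF a (Set.mem_univ a) ha⟩

end AuxFive

section AuxSix

variable {K n}

/-- What we need about a monomial order. -/
structure GoodOrd (r : (Fin n →₀ ℕ) → (Fin n →₀ ℕ) → Prop) : Prop where
  add : ∀ u v w, r u v → r (u + w) (v + w)
  total : ∀ u v, u = v ∨ r u v ∨ r v u
  weight : ∀ D : ℕ, ∃ w : Fin n → ℕ, ∀ u m : Fin n →₀ ℕ, (∀ k, u k ≤ D) → (∀ k, m k ≤ D) →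
    r u m → ∑ k, w k * u k < ∑ k, w k * m k

theorem digits_bound (D : ℕ) (u : ℕ → ℕ) (hu : ∀ k, u k ≤ D) (i : ℕ) :
    ∑ k ∈ Finset.range i, (D + 1) ^ k * u k < (D + 1) ^ i := by
  induction i with
  | zero => simp
  | succ i ih =>
    rw [Finset.sum_range_succ, pow_succ]
    have := Nat.mul_le_mul_left ((D + 1) ^ i) (hu i)
    nlinarith

theorem digits_lt (D : ℕ) (u m : ℕ → ℕ) (hu : ∀ k, u k ≤ D) (i N : ℕ) (hi : i < N)
    (h1 : u i < m i) (h2 : ∀ k, i < k → k < N → u k = m k) :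
    ∑ k ∈ Finset.range N, (D + 1) ^ k * u k < ∑ k ∈ Finset.range N, (D + 1) ^ k * m k := by
  induction N with
  | zero => omega
  | succ N ih =>
    rw [Finset.sum_range_succ, Finset.sum_range_succ]
    rcases Nat.lt_succ_iff_lt_or_eq.mp hi with h | rfl
    · rw [h2 N h (by omega)]
      have := ih h (fun k hk hk' => h2 k hk (by omega))
      omega
    · have a := digits_bound D u hu i
      have b := Nat.mul_le_mul_left ((D + 1) ^ i) (Nat.succ_le_of_lt h1)
      rw [Nat.mul_succ] at b
      omega

theorem digits_lt_fin (D : ℕ) (u m : Fin n → ℕ) (hu : ∀ k, u k ≤ D) (i : Fin n)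
    (h1 : u i < m i) (h2 : ∀ k, i < k → u k = m k) :
    ∑ k : Fin n, (D + 1) ^ (k : ℕ) * u k < ∑ k : Fin n, (D + 1) ^ (k : ℕ) * m k := by
  have key := digits_lt D (fun k => if h : k < n then u ⟨k, h⟩ else 0)
    (fun k => if h : k < n then m ⟨k, h⟩ else 0)
    (fun k => by
      by_cases h : k < n
      · simpa [h] using hu _
      · simp [h]) i n i.2 (by simpa using h1)
    (fun k hk hk' => by simpa [hk'] using h2 ⟨k, hk'⟩ hk)
  rw [Finset.sum_range, Finset.sum_range] at key
  simpa using key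

theorem good_oplex : GoodOrd (oplexLt n) where
  add := by
    rintro u v w ⟨i, h1, h2⟩
    exact ⟨i, fun k hk => by simpa using h1 k hk, by simpa using h2⟩
  total := by
    intro u v
    by_cases h : u = v
    · exact Or.inl h
    right
    have hne : (Finset.univ.filter fun k => u k ≠ v k).Nonempty := by
      by_contra h0
      rw [Finset.not_nonempty_iff_eq_empty, Finset.filter_eq_empty_iff] at h0
      exact h (Finsupp.ext fun k => by simpa using h0 (Finset.mem_univ k))
    have hm := Finset.max'_mem _ hne
    have hl : ∀ k, (Finset.univ.filter fun k => u k ≠ v k).max' hne < k → u k = v k := by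
      intro k hk
      by_contra h0
      exact absurd (Finset.le_max' _ k (by simpa using h0)) (not_le.mpr hk)
    rw [Finset.mem_filter] at hm
    rcases lt_or_gt_of_ne hm.2 with h3 | h3
    · exact Or.inl ⟨_, hl, h3⟩
    · exact Or.inr ⟨_, fun k hk => (hl k hk).symm, h3⟩
  weight := by
    intro D
    refine ⟨fun k => (D + 1) ^ (k : ℕ), ?_⟩
    rintro u m hu hm ⟨i, h1, h2⟩
    exact digits_lt_fin D u m hu i h2 h1

theorem good_lex : GoodOrd (lexLt n) where
  add := by
    rintro u v w ⟨i, h1, h2⟩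
    exact ⟨i, fun k hk => by simpa using h1 k hk, by simpa using h2⟩
  total := by
    intro u v
    by_cases h : u = v
    · exact Or.inl h
    right
    have hne : (Finset.univ.filter fun k => u k ≠ v k).Nonempty := by
      by_contra h0
      rw [Finset.not_nonempty_iff_eq_empty, Finset.filter_eq_empty_iff] at h0
      exact h (Finsupp.ext fun k => by simpa using h0 (Finset.mem_univ k))
    have hm := Finset.min'_mem _ hne
    have hl : ∀ k, k < (Finset.univ.filter fun k => u k ≠ v k).min' hne → u k = v k := by
      intro k hk
      by_contra h0
      exact absurd (Finset.min'_le _ k (by simpa using h0)) (not_le.mpr hk)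
    rw [Finset.mem_filter] at hm
    rcases lt_or_gt_of_ne hm.2 with h3 | h3
    · exact Or.inl ⟨_, hl, h3⟩
    · exact Or.inr ⟨_, fun k hk => (hl k hk).symm, h3⟩
  weight := by
    intro D
    refine ⟨fun k => (D + 1) ^ (Fin.rev k : ℕ), ?_⟩
    rintro u m hu hm ⟨i, h1, h2⟩
    have := digits_lt_fin D (fun k => u (Fin.rev k)) (fun k => m (Fin.rev k)) (fun k => hu _)
      (Fin.rev i) (by simpa using h2) (fun k hk => h1 _ (by simpa using Fin.rev_lt_rev.mpr hk))
    rw [← Equiv.sum_comp Fin.revPerm, ← Equiv.sum_comp Fin.revPerm (fun k => _ * m _)] at this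
    simpa using this

/-! Initial ideals. -/

variable {r : (Fin n →₀ ℕ) → (Fin n →₀ ℕ) → Prop}

theorem mem_initial (hr : GoodOrd r) {I : Ideal (PS K n)} {x : PS K n} :
    x ∈ initialIdealO K n r I ↔ ∀ m ∈ x.support, ∃ f ∈ I, m ∈ f.support ∧
      ∀ m' ∈ f.support, m' = m ∨ r m' m := by
  have e : {g | ∃ f ∈ I, ∃ m ∈ f.support,
      (∀ m' ∈ f.support, m' = m ∨ r m' m) ∧ g = MvPolynomial.monomial m (1 : K)} =
      (fun m => monomial m (1 : K)) '' {m | ∃ f ∈ I, m ∈ f.support ∧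
        ∀ m' ∈ f.support, m' = m ∨ r m' m} := by
    ext g
    constructor
    · rintro ⟨f, hf, m, hm, h, rfl⟩
      exact ⟨m, ⟨f, hf, hm, h⟩, rfl⟩
    · rintro ⟨m, ⟨f, hf, hm, h⟩, rfl⟩
      exact ⟨f, hf, m, hm, h, rfl⟩
  rw [initialIdealO, e, mem_ideal_span_monomial_image]
  refine forall₂_congr fun m _ => ⟨?_, fun h => ⟨m, h, le_rfl⟩⟩
  rintro ⟨s, ⟨f, hf, hs, h⟩, hsm⟩
  refine ⟨monomial (m - s) 1 * f, Ideal.mul_mem_left _ _ hf, ?_, ?_⟩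
  · rw [mem_support_iff] at hs ⊢
    have := coeff_monomial_mul s (m - s) (1 : K) f
    rw [tsub_add_cancel_of_le hsm, one_mul] at this
    rw [this]
    exact hs
  · intro m' hm'
    rw [mem_support_iff, coeff_monomial_mul'] at hm'
    split_ifs at hm' with hle
    · rw [one_mul, ← mem_support_iff] at hm'
      have e1 : m' = (m' - (m - s)) + (m - s) := (tsub_add_cancel_of_le hle).symm
      have e2 : m = s + (m - s) := (add_tsub_cancel_of_le hsm).symm
      rcases h _ hm' with h1 | h1
      · left
        rw [e1, h1, ← e2]
      · right
        have := hr.add _ _ (m - s) h1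
        rwa [← e1, ← e2] at this
    · exact absurd rfl hm'

theorem initial_homog (hr : GoodOrd r) (I : Ideal (PS K n)) :
    IsHomog K n (initialIdealO K n r I) := by
  intro x hx d
  rw [mem_initial hr] at hx ⊢
  intro m hm
  apply hx
  rw [mem_support_iff, coeff_homogeneousComponent] at hm
  rw [mem_support_iff]
  intro h
  simp [h] at hm

theorem initial_lead (hr : GoodOrd r) {I : Ideal (PS K n)} (hI : IsHomog K n I) {x : PS K n}
    (hx : x ∈ initialIdealO K n r I) {m : Fin n →₀ ℕ} (hm : m ∈ x.support) :
    ∃ f ∈ gr I m.degree, coeff m f = 1 ∧ ∀ m' ∈ f.support, m' = m ∨ r m' m := by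
  obtain ⟨f, hf, hm, h⟩ := (mem_initial hr).mp hx m hm
  rw [mem_support_iff] at hm
  refine ⟨(coeff m f)⁻¹ • homogeneousComponent m.degree f,
    Submodule.smul_mem _ _ (comp_mem_gr hI hf _), ?_, fun m' hm' => h m' ?_⟩
  · rw [coeff_smul, coeff_homogeneousComponent, if_pos rfl, smul_eq_mul, inv_mul_cancel₀ hm]
  · rw [mem_support_iff, coeff_smul, coeff_homogeneousComponent] at hm'
    rw [mem_support_iff]
    intro h0
    simp [h0] at hm'

/-- The diagonal matrix of a one-parameter group. -/
def lam (w : Fin n → ℕ) (t : K) : Matrix (Fin n) (Fin n) K :=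
  Matrix.diagonal fun i => (t ^ w i)⁻¹

theorem lam_mul (w : Fin n → ℕ) {t : K} (ht : t ≠ 0) :
    lam w t * Matrix.diagonal (fun i => t ^ w i) = 1 := by
  rw [lam, Matrix.diagonal_mul_diagonal, ← Matrix.diagonal_one]
  congr 1
  ext i
  exact inv_mul_cancel₀ (pow_ne_zero _ ht)

theorem cc_lam (w : Fin n → ℕ) (t : K) (m : Fin n →₀ ℕ) (c : K) :
    cc (lam w t) (monomial m c) = (t ^ ∑ k, w k * m k)⁻¹ • monomial m c := by
  have h1 : cc (lam w t) = aeval (fun i => (t ^ w i)⁻¹ • (X i : PS K n)) := by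
    refine MvPolynomial.algHom_ext fun i => ?_
    simp [cc, lam, Matrix.diagonal_apply, ite_smul]
  rw [h1, aeval_monomial, Finsupp.prod_fintype _ _ (by simp), monomial_eq,
    Finsupp.prod_fintype _ _ (by simp)]
  simp only [smul_eq_C_mul, Finset.prod_mul_distrib, algebraMap_eq, mul_pow]
  have h2 : ∏ i, (C ((t ^ w i)⁻¹) : PS K n) ^ m i = C ((t ^ ∑ k, w k * m k)⁻¹) := by
    rw [← Finset.prod_pow_eq_pow_sum, ← Finset.prod_inv_distrib, map_prod]
    refine Finset.prod_congr rfl fun i _ => ?_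
    rw [← map_pow, inv_pow, ← pow_mul]
  rw [h2]; ring

theorem initial_Lim (hr : GoodOrd r) {I : Ideal (PS K n)} (hI : IsHomog K n I) {D : ℕ}
    {w : Fin n → ℕ} (hw : ∀ u m : Fin n →₀ ℕ, (∀ k, u k ≤ D) → (∀ k, m k ≤ D) →
      r u m → ∑ k, w k * u k < ∑ k, w k * m k) (p : ℤ) (hp : p ≤ D) :
    gr (initialIdealO K n r I) p ≤ Lim {a : Unit → K | a () ≠ 0} (fun _ => 0)
      (fun a => gr (I.map (cc (lam w (a ())))) p) := by
  by_cases hp0 : p < 0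
  · rw [gr_neg _ p hp0]; exact bot_le
  obtain ⟨d, rfl⟩ := Int.eq_ofNat_of_zero_le (not_lt.mp hp0)
  intro x hx
  rw [as_sum x]
  refine Submodule.sum_mem _ fun m hm => ?_
  have hxh : x.IsHomogeneous d := by
    have := hx.1
    rwa [polyGrade_nat] at this
  have hmd : m.degree = d := by
    by_contra h
    exact (mem_support_iff.mp hm) (hxh.coeff_eq_zero h)
  have hc : monomial m (coeff m x) = coeff m x • (monomial m (1 : K)) := by
    rw [smul_monomial, smul_eq_mul, mul_one]
  rw [hc]
  refine Submodule.smul_mem _ _ ?_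
  obtain ⟨f, hf, hf1, hfr⟩ := initial_lead hr hI hx.2 hm
  rw [hmd] at hf
  have hfh : f.IsHomogeneous d := by
    have := hf.1
    rwa [polyGrade_nat] at this
  have hb : ∀ u : Fin n →₀ ℕ, u.degree = d → ∀ k, u k ≤ D := fun u hu k => by
    have := Finsupp.le_degree k u
    omega
  have hfd : ∀ u ∈ f.support, u.degree = d := fun u hu => by
    by_contra h
    exact (mem_support_iff.mp hu) (hfh.coeff_eq_zero h)
  have hlt : ∀ u ∈ f.support, u ≠ m → ∑ k, w k * u k < ∑ k, w k * m k := fun u hu hne =>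
    hw u m (hb u (hfd u hu)) (hb m hmd) ((hfr u hu).resolve_left hne)
  have hle : ∀ u ∈ f.support, ∑ k, w k * u k ≤ ∑ k, w k * m k := fun u hu => by
    by_cases h : u = m
    · rw [h]
    · exact (hlt u hu h).le
  have hmf : m ∈ f.support := by rw [mem_support_iff, hf1]; exact one_ne_zero
  refine ⟨fun a => ∑ u ∈ f.support, (a () ^ (∑ k, w k * m k - ∑ k, w k * u k)) •
    monomial u (coeff u f), IsPF.sum _ fun u _ => ?_, ?_, fun a ha => ?_⟩
  · simpa using IsPF.base (X () ^ (∑ k, w k * m k - ∑ k, w k * u k) : MvPolynomial Unit K)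
      (monomial u (coeff u f) : PS K n)
  · show ∑ u ∈ f.support, _ = _
    rw [Finset.sum_eq_single m]
    · simp [hf1]
    · intro u hu hne
      have := hlt u hu hne
      rw [zero_pow (by omega), zero_smul]
    · exact fun h => absurd hmf h
  · have e : ∑ u ∈ f.support, (a () ^ (∑ k, w k * m k - ∑ k, w k * u k)) •
        monomial u (coeff u f) = (a () ^ ∑ k, w k * m k) • cc (lam w (a ())) f := by
      conv_rhs => rw [as_sum f]
      rw [map_sum, Finset.smul_sum]
      refine Finset.sum_congr rfl fun u hu => ?_
      rw [cc_lam, smul_smul, pow_sub₀ _ ha (hle u hu)]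
    show ∑ u ∈ f.support, _ ∈ _
    rw [e]
    exact Submodule.smul_mem _ _ (cc_gr _ hf)

theorem exists_lead (hr : GoodOrd r) {f : PS K n} (hf : f ≠ 0) :
    ∃ m ∈ f.support, ∀ m' ∈ f.support, m' = m ∨ r m' m := by
  have hb : ∀ u ∈ f.support, ∀ k, u k ≤ f.totalDegree := fun u hu k =>
    (Finsupp.le_degree k u).trans (le_totalDegree hu)
  obtain ⟨w, hw⟩ := hr.weight f.totalDegree
  obtain ⟨m, hm, hmax⟩ := Finset.exists_max_image f.support (fun u => ∑ k, w k * u k)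
    (support_nonempty.mpr hf)
  refine ⟨m, hm, fun u hu => ?_⟩
  rcases hr.total u m with h | h | h
  · exact Or.inl h
  · exact Or.inr h
  · exact absurd (hw m u (hb m hm) (hb u hu) h) (not_lt.mpr (hmax u hu))

theorem initial_ge (hr : GoodOrd r) (I : Ideal (PS K n)) (p : ℤ) :
    Module.finrank K (gr I p) ≤ Module.finrank K (gr (initialIdealO K n r I) p) := by
  classical
  let P : (Fin n →₀ ℕ) → Prop := fun m => monomial m (1 : K) ∈ initialIdealO K n r I
  let π : PS K n →ₗ[K] PS K n := (basisMonomials (Fin n) K).constr K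
    (fun m => if P m then monomial m 1 else 0)
  have hπm : ∀ m, π (monomial m 1) = if P m then monomial m 1 else 0 := fun m => by
    have := (basisMonomials (Fin n) K).constr_basis K
      (fun m => if P m then monomial m (1 : K) else 0) m
    rwa [coe_basisMonomials] at this
  have hπ : ∀ x, π x = ∑ m ∈ x.support, coeff m x • (if P m then monomial m 1 else 0) := by
    intro x
    conv_lhs => rw [as_sum x]
    rw [map_sum]
    refine Finset.sum_congr rfl fun m _ => ?_
    have hc : monomial m (coeff m x) = coeff m x • (monomial m (1 : K)) := by
      rw [smul_monomial, smul_eq_mul, mul_one]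
    rw [hc, map_smul, hπm]
  have hco : ∀ x m, P m → coeff m (π x) = coeff m x := by
    intro x m hm
    rw [hπ, coeff_sum]
    rw [Finset.sum_eq_single m]
    · rw [if_pos hm]; simp
    · intro u _ hu
      split_ifs
      · simp [coeff_monomial, hu]
      · simp
    · intro h
      rw [notMem_support_iff.mp h]; simp
  have hmaps : ∀ x ∈ gr I p, π x ∈ gr (initialIdealO K n r I) p := by
    intro x hx
    rw [hπ]
    refine Submodule.sum_mem _ fun m hm => Submodule.smul_mem _ _ ?_
    split_ifs with hP
    · refine ⟨?_, hP⟩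
      by_cases hp0 : p < 0
      · have : x ∈ polyGrade K n p := hx.1
        rw [polyGrade_neg hp0, Submodule.mem_bot] at this
        rw [this] at hm; simp at hm
      obtain ⟨d, rfl⟩ := Int.eq_ofNat_of_zero_le (not_lt.mp hp0)
      have hxh : x.IsHomogeneous d := by
        have := hx.1
        rwa [polyGrade_nat] at this
      have hmd : m.degree = d := by
        by_contra h
        exact (mem_support_iff.mp hm) (hxh.coeff_eq_zero h)
      rw [polyGrade_nat]
      exact isHomogeneous_monomial _ hmd
    · exact zero_mem _
  have := gr_finite (initialIdealO K n r I) p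
  refine LinearMap.finrank_le_finrank_of_injective (f := π.restrict hmaps) ?_
  rw [← LinearMap.ker_eq_bot, LinearMap.ker_eq_bot']
  rintro ⟨x, hx⟩ h0
  have h1 : π x = 0 := congrArg Subtype.val h0
  by_contra hne
  have hx0 : x ≠ 0 := fun h => hne (Subtype.ext h)
  obtain ⟨m, hm, hmax⟩ := exists_lead hr hx0
  have hP : P m := Ideal.subset_span ⟨x, hx.2, m, hm, hmax, rfl⟩
  have h2 := hco x m hP
  rw [h1, coeff_zero] at h2
  exact (mem_support_iff.mp hm) h2.symm

theorem exists_t [Infinite K] {F : MvPolynomial Unit K} (hF : eval (fun _ => 0) F ≠ 0) :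
    ∃ a : Unit → K, a () ≠ 0 ∧ eval a F ≠ 0 := by
  have h0 : F ≠ 0 := fun h => hF (by simp [h])
  obtain ⟨a, ha⟩ := exists_eval_ne (mul_ne_zero h0 (X_ne_zero ()))
  rw [map_mul, eval_X] at ha
  exact ⟨a, right_ne_zero_of_mul ha, left_ne_zero_of_mul ha⟩

theorem initial_finrank [Infinite K] (hr : GoodOrd r) {I : Ideal (PS K n)} (hI : IsHomog K n I)
    (p : ℤ) :
    Module.finrank K (gr (initialIdealO K n r I) p) = Module.finrank K (gr I p) := by
  refine le_antisymm ?_ (initial_ge hr I p)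
  obtain ⟨w, hw⟩ := hr.weight p.toNat
  have := gr_finite (initialIdealO K n r I) p
  obtain ⟨F, hF0, hF⟩ := finrank_Lim (fun a _ => gr_finite _ _)
    (initial_Lim hr hI hw p (Int.self_le_toNat p))
  obtain ⟨a, ha, haF⟩ := exists_t hF0
  have := hF a ha haF
  rwa [gr_cc_finrank (lam_mul w ha)] at this

theorem initial_Ws [Infinite K] {r' : (Fin n →₀ ℕ) → (Fin n →₀ ℕ) → Prop} (hr : GoodOrd r)
    (hr' : GoodOrd r') {I J : Ideal (PS K n)} (hI : IsHomog K n I) (hJ : IsHomog K n J) (j : ℤ)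
    (N : ℕ) : ∃ A A' B B' : Matrix (Fin n) (Fin n) K, A * A' = 1 ∧ B * B' = 1 ∧ ∀ i < N,
      Module.finrank K (Ws (initialIdealO K n r I) (initialIdealO K n r' J) j i) ≤
        Module.finrank K (Ws (I.map (cc A)) (J.map (cc B)) j i) := by
  obtain ⟨w, hw⟩ := hr.weight j.toNat
  obtain ⟨w', hw'⟩ := hr'.weight j.toNat
  have hj := Int.self_le_toNat j
  obtain ⟨F, hF0, hF⟩ := prod_poly (K := K) (σ := Unit) (a0 := fun _ => 0) (P := fun i a =>
    a () ≠ 0 → Module.finrank K (Ws (initialIdealO K n r I) (initialIdealO K n r' J) j i) ≤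
        Module.finrank K (Ws (I.map (cc (lam w (a ())))) (J.map (cc (lam w' (a ())))) j i)) N
    (fun i _ => by
      have := Ws_finite (initialIdealO K n r I) (initialIdealO K n r' J) j i
      obtain ⟨F, hF0, hF⟩ := finrank_Lim (fun a _ => Ws_finite _ _ _ _)
        (Ws_Lim_le j (fun p hp => initial_Lim hr hI hw p (hp.trans hj))
          (fun p hp => initial_Lim hr' hJ hw' p (hp.trans hj)) i)
      exact ⟨F, hF0, fun a haF ha => hF a ha haF⟩)
  obtain ⟨a, ha, haF⟩ := exists_t hF0
  exact ⟨_, _, _, _, lam_mul w ha, lam_mul w' ha, fun i hi => hF a haF i hi ha⟩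

theorem generally_exists [Infinite K] {P : GL (Fin n) K → Prop} (h : generally K n P) :
    ∃ g, P g := by
  classical
  obtain ⟨F, hF, h⟩ := h
  obtain ⟨a, ha⟩ := exists_eval_ne
    (mul_ne_zero hF (Matrix.det_mvPolynomialX_ne_zero (Fin n) K))
  rw [map_mul] at ha
  have hdet : eval a (Matrix.det (Matrix.mvPolynomialX (Fin n) (Fin n) K)) =
      Matrix.det (Matrix.of fun i j => a (i, j)) := by
    rw [RingHom.map_det]
    congr 1
    ext i j
    simp [Matrix.mvPolynomialX]
  have hd : Matrix.det (Matrix.of fun i j => a (i, j)) ≠ 0 := by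
    rw [← hdet]; exact right_ne_zero_of_mul ha
  refine ⟨Matrix.GeneralLinearGroup.mkOfDetNeZero _ hd, h _ ?_⟩
  exact left_ne_zero_of_mul ha

theorem main_aux [Infinite K] (j : ℤ)
    (I J : Ideal (PS K n)) (hI : IsHomog K n I) (hJ : IsHomog K n J)
    (GinI : Ideal (PS K n))
    (hGinI : generally K n (fun g =>
      initialIdealO K n (lexLt n) (Ideal.map (coordChange K n g) I) = GinI))
    (GinJ : Ideal (PS K n))
    (hGinJ : generally K n (fun g =>
      initialIdealO K n (oplexLt n) (Ideal.map (coordChange K n g) J) = GinJ)) :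
    generally K n (fun g => ∀ i : ℕ,
      torIQ K n I (Ideal.map (coordChange K n g) J) i j ≤ torIQ K n GinI GinJ i j) := by
  classical
  obtain ⟨h0, rfl⟩ := generally_exists hGinI
  obtain ⟨k0, rfl⟩ := generally_exists hGinJ
  simp only [coordChange_eq]
  have hinv : ∀ g : GL (Fin n) K, (g : Matrix (Fin n) (Fin n) K) * ((g⁻¹ : GL (Fin n) K) :
      Matrix (Fin n) (Fin n) K) = 1 := fun g => by
    rw [← Units.val_mul, mul_inv_cancel, Units.val_one]
  have hI0 := homog_cc (hinv h0) hI
  have hJ0 := homog_cc (hinv k0) hJ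
  obtain ⟨A, A', B, B', hA, hB, hW⟩ :=
    initial_Ws good_lex good_oplex hI0 hJ0 j (j.toNat + 1)
  -- the two total changes of coordinates
  set H : Matrix (Fin n) (Fin n) K := A * h0 with hH
  set H' : Matrix (Fin n) (Fin n) K := ((h0⁻¹ : GL (Fin n) K) : Matrix (Fin n) (Fin n) K) * A'
    with hH'
  have hHH : H * H' = 1 := by
    rw [hH, hH', Matrix.mul_assoc, ← Matrix.mul_assoc _ _ A', hinv, Matrix.one_mul, hA]
  have hHH' : H' * H = 1 := mul_eq_one_comm.mp hHH
  set k : Matrix (Fin n) (Fin n) K := B * k0 with hk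
  set k' : Matrix (Fin n) (Fin n) K := ((k0⁻¹ : GL (Fin n) K) : Matrix (Fin n) (Fin n) K) * B'
    with hk'
  have hkk : k * k' = 1 := by
    rw [hk, hk', Matrix.mul_assoc, ← Matrix.mul_assoc _ _ B', hinv, Matrix.one_mul, hB]
  have hg0 : (H' * k) * (k' * H) = 1 := by
    rw [Matrix.mul_assoc, ← Matrix.mul_assoc k, hkk, Matrix.one_mul, hHH']
  obtain ⟨F, hF0, hF⟩ := generic_Ws (a0 := fun q => (H' * k) q.1 q.2) (B := k' * H) hg0 I J j
    (j.toNat + 1)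
  refine ⟨F, fun h => hF0 (by simp [h]), fun g hg => ?_⟩
  have hF' := hF _ hg
  refine torIQ_le hI (homog_cc (hinv g) hJ) (initial_homog good_lex _)
    (initial_homog good_oplex _) (fun p => ?_) (fun p => ?_) j (fun i hi => ?_)
  · rw [initial_finrank good_lex hI0, gr_cc_finrank (hinv h0)]
  · rw [initial_finrank good_oplex hJ0, gr_cc_finrank (hinv k0), gr_cc_finrank (hinv g)]
  · refine (hW i hi).trans (le_trans ?_ (hF' i hi))
    rw [cc_map_map, cc_map_map]
    have e := Ws_cc hHH I (J.map (cc (H' * k))) j i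
    rw [cc_map_map, ← Matrix.mul_assoc, hHH, Matrix.one_mul] at e
    exact e

end AuxSix

/-- **Theorem 2.8(ii)** (Caviglia–Murai): fix `j` and homogeneous ideals `I, J ⊆ S`.  For a
general change of coordinates `g ∈ GL_n(K)`,
`dim_K Tor_i(I, S/g(J))_j ≤ dim_K Tor_i(Gin_lex(I), S/Gin_oplex(J))_j` for all `i`. -/
theorem tor_dim_general_le_gins_ideal [Infinite K] (j : ℤ)
    (I J : Ideal (PS K n)) (hI : IsHomog K n I) (hJ : IsHomog K n J)
    (GinI : Ideal (PS K n))
    (hGinI : generally K n (fun g =>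
      initialIdealO K n (lexLt n) (Ideal.map (coordChange K n g) I) = GinI))
    (GinJ : Ideal (PS K n))
    (hGinJ : generally K n (fun g =>
      initialIdealO K n (oplexLt n) (Ideal.map (coordChange K n g) J) = GinJ))
 :
    generally K n (fun g => ∀ i : ℕ,
      torIQ K n I (Ideal.map (coordChange K n g) J) i j ≤ torIQ K n GinI GinJ i j) := by
  exact main_aux j I J hI hJ GinI hGinI GinJ hGinJ

end
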